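/- arXiv:1203.1955 — 6 statements merged into one kernel-verified Lean document; each statement's English description precedes it below -/
import Mathlib

section
/- Let R be a commutative noetherian local ring and let X be any class of finitely generated R-modules. Then V(⋂_{i>0, M ∈ X, L finite length} Ann_R Ext_R^i(M,L)) = V(⋂_{i>0, M ∈ X, N} Ann_R Ext_R^i(M,N)), where L ranges over all finite-length R-modules and N ranges over all finitely generated R-modules. -/
open CategoryTheory IsLocalRing

noncomputable section

/-- The `i`-th Tor module of two `R`-modules, as an object of `ModuleCat R`. -/
def TorMod (R : Type) [CommRing R] (i : ℕ) (M N : ModuleCat.{0} R) : ModuleCat.{0} R :=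
  ((Tor (ModuleCat.{0} R) i).obj M).obj N

/-- The `i`-th Ext module of two `R`-modules, as an object of `ModuleCat R`. -/
def ExtMod (R : Type) [CommRing R] (i : ℕ) (M N : ModuleCat.{0} R) : ModuleCat.{0} R :=
  ((Ext R (ModuleCat.{0} R) i).obj (Opposite.op M)).obj N

/-- Integer-indexed Tor: `Tor_n = 0` for `n < 0`. -/
def TorZ (R : Type) [CommRing R] (n : ℤ) (M N : ModuleCat.{0} R) : ModuleCat.{0} R :=
  if 0 ≤ n then TorMod R n.toNat M N else ModuleCat.of R PUnit

/-- Integer-indexed Ext: `Ext^n = 0` for `n < 0`. -/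
def ExtZ (R : Type) [CommRing R] (n : ℤ) (M N : ModuleCat.{0} R) : ModuleCat.{0} R :=
  if 0 ≤ n then ExtMod R n.toNat M N else ModuleCat.of R PUnit

/-- The depth of a module `N` over a local ring `S`, defined as the infimum of the set of
integers `i` such that `Ext^i(k, N) ≠ 0`, where `k` is the residue field of `S`
(`⊤` if no such `i` exists). -/
def moduleDepth (S : Type) [CommRing S] [IsLocalRing S] (N : Type) [AddCommGroup N]
    [Module S N] : ℕ∞ :=
  sInf {i : ℕ∞ | ∃ j : ℕ, i = (j : ℕ∞) ∧
    Nontrivial (ExtMod S j (ModuleCat.of S (ResidueField S)) (ModuleCat.of S N))}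

/-- A local ring is regular if it is noetherian and its maximal ideal can be generated by
(Krull dimension of `S`)-many elements. -/
def IsRegularLocal (S : Type) [CommRing S] [IsLocalRing S] : Prop :=
  IsNoetherianRing S ∧ ∃ s : Finset S, Ideal.span (s : Set S) = maximalIdeal S ∧
    (s.card : WithBot ℕ∞) = ringKrullDim S

/-- A local ring is Cohen-Macaulay if its depth (as a module over itself) equals its
Krull dimension. -/
def IsCMLocalRing (R : Type) [CommRing R] [IsLocalRing R] : Prop :=
  (moduleDepth R R : WithBot ℕ∞) = ringKrullDim R

/-- A module `M` over a local ring `R` is maximal Cohen-Macaulay if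
`depth M_p ≥ dim R_p` for every prime ideal `p` of `R`. -/
def IsMCMModule (R : Type) [CommRing R] [IsLocalRing R] (M : Type) [AddCommGroup M]
    [Module R M] : Prop :=
  ∀ (p : Ideal R) [p.IsPrime],
    ringKrullDim (Localization.AtPrime p) ≤
      (moduleDepth (Localization.AtPrime p) (LocalizedModule p.primeCompl M) : WithBot ℕ∞)

/-- Membership in `CM(R)`: finitely generated maximal Cohen-Macaulay modules. -/
def MemCM (R : Type) [CommRing R] [IsLocalRing R] (M : ModuleCat.{0} R) : Prop :=
  Module.Finite R M ∧ IsMCMModule R M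

/-- Membership in `CM₀(R)`: finitely generated maximal Cohen-Macaulay modules that are
locally free on the punctured spectrum. -/
def MemCM0 (R : Type) [CommRing R] [IsLocalRing R] (M : ModuleCat.{0} R) : Prop :=
  Module.Finite R M ∧ IsMCMModule R M ∧
    ∀ (p : Ideal R) [p.IsPrime], p ≠ maximalIdeal R →
      Module.Free (Localization.AtPrime p) (LocalizedModule p.primeCompl M)

/-- The singular locus of `R`: primes `p` such that `R_p` is not regular. -/
def singularLocus (R : Type) [CommRing R] : Set (PrimeSpectrum R) :=
  {p | ¬ IsRegularLocal (Localization.AtPrime p.asIdeal)}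

/-- The nonfree locus of a module `M`: primes `p` such that `M_p` is not a free
`R_p`-module. -/
def nonfreeLocus (R : Type) [CommRing R] (M : Type) [AddCommGroup M] [Module R M] :
    Set (PrimeSpectrum R) :=
  {p | ¬ Module.Free (Localization.AtPrime p.asIdeal)
        (LocalizedModule p.asIdeal.primeCompl M)}

/-- `K` is a first syzygy of `N` in a minimal free resolution: there is a surjection
`f : R^n → N` with `ker f ⊆ m·R^n` and `K ≅ ker f`. -/
def IsMinimalSyzygy1 (R : Type) [CommRing R] [IsLocalRing R] (N K : ModuleCat.{0} R) : Prop :=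
  ∃ (n : ℕ) (f : (Fin n → R) →ₗ[R] N), Function.Surjective f ∧
    LinearMap.ker f ≤ (maximalIdeal R) • (⊤ : Submodule R (Fin n → R)) ∧
    Nonempty (K ≃ₗ[R] LinearMap.ker f)

/-- `K` is a `d`-th syzygy of `N` in a minimal free resolution. -/
def IsMinimalSyzygy (R : Type) [CommRing R] [IsLocalRing R] :
    ℕ → ModuleCat.{0} R → ModuleCat.{0} R → Prop
  | 0, N, K => Nonempty ((K : Type) ≃ₗ[R] N)
  | d + 1, N, K => ∃ L : ModuleCat.{0} R, IsMinimalSyzygy1 R N L ∧ IsMinimalSyzygy R d L K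

/-- A module is indecomposable if it is nonzero and is not isomorphic to the direct sum of
two nonzero modules. -/
def IndecomposableModule (R : Type) [CommRing R] (M : Type) [AddCommGroup M] [Module R M] :
    Prop :=
  Nontrivial M ∧ ∀ (A B : Type) [AddCommGroup A] [Module R A] [AddCommGroup B] [Module R B],
    Nonempty (M ≃ₗ[R] A × B) → (Subsingleton A ∨ Subsingleton B)

theorem fgm_surj {R : Type} [CommRing R] [IsNoetherianRing R] {X Y : FGModuleCat.{0} R} (f : X ⟶ Y) [Epi f] :
   Function.Surjective f.hom.hom := by
  have : Epi ((forget₂ (FGModuleCat R) (ModuleCat.{0} R)).map f) := inferInstance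
  exact (ModuleCat.epi_iff_surjective _).1 this

theorem fgm_epi {R : Type} [CommRing R] [IsNoetherianRing R] {X Y : FGModuleCat.{0} R} (f : X ⟶ Y)
   (h : Function.Surjective f.hom.hom) : Epi f := by
  have : Epi ((forget₂ (FGModuleCat R) (ModuleCat.{0} R)).map f) := (ModuleCat.epi_iff_surjective _).2 h
  exact Functor.epi_of_epi_map _ this

theorem fgm_proj {R : Type} [CommRing R] [IsNoetherianRing R] (P : FGModuleCat.{0} R)
   [Module.Projective R P] : Projective P := by
  constructor
  intro E X f e he
  obtain ⟨g, hg⟩ := Module.projective_lifting_property e.hom.hom f.hom.hom (fgm_surj e)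
  refine ⟨⟨ModuleCat.ofHom g⟩, ?_⟩
  ext1
  exact hg

instance fgm_enough {R : Type} [CommRing R] [IsNoetherianRing R] :
    EnoughProjectives (FGModuleCat.{0} R) where
  presentation Y := by
    obtain ⟨n, f, hf⟩ := Module.Finite.exists_fin' R Y
    exact ⟨{ p := FGModuleCat.of R (Fin n → R)
             projective := by
              have : Module.Projective R (FGModuleCat.of R (Fin n → R)) := inferInstanceAs (Module.Projective R (Fin n → R))
              exact fgm_proj _
             f := ⟨ModuleCat.ofHom f⟩
             epi := fgm_epi _ hf }⟩

theorem fgm_proj' {R : Type} [CommRing R] [IsNoetherianRing R] (P : FGModuleCat.{0} R)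
   [Projective P] : Module.Projective R P := by
  obtain ⟨n, f, hf⟩ := Module.Finite.exists_fin' R P
  let F : FGModuleCat.of R (Fin n → R) ⟶ P := ⟨ModuleCat.ofHom f⟩
  have : Epi F := fgm_epi _ hf
  have h := Projective.factorThru_comp (𝟙 P) F
  refine Module.Projective.of_split (M := Fin n → R) (Projective.factorThru (𝟙 P) F).hom.hom f ?_
  exact congrArg (fun t => t.hom.hom) h

instance fgm_pp {R : Type} [CommRing R] [IsNoetherianRing R] :
    (forget₂ (FGModuleCat.{0} R) (ModuleCat.{0} R)).PreservesProjectiveObjects where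
  projective_obj {P} hP := by
    have := fgm_proj' P
    exact ModuleCat.projective_of_categoryTheory_projective (ModuleCat.of R P)

theorem exists_res {R : Type} [CommRing R] [IsNoetherianRing R] (M : ModuleCat.{0} R) [Module.Finite R M] :
    ∃ P : ProjectiveResolution M, ∀ i, Module.Finite R (P.complex.X i) ∧ Module.Projective R (P.complex.X i) := by
  let Q := ProjectiveResolution.of (FGModuleCat.of R M)
  refine ⟨(forget₂ (FGModuleCat.{0} R) (ModuleCat.{0} R)).mapProjectiveResolution Q, fun i => ⟨?_, ?_⟩⟩
  · exact (Q.complex.X i).property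
  · have := Q.projective i
    exact fgm_proj' (Q.complex.X i)

theorem ann_iff {R : Type} [CommRing R] {M : ModuleCat.{0} R} (P : ProjectiveResolution M)
    (N : ModuleCat.{0} R) (i : ℕ) (r : R) :
    r ∈ Module.annihilator R (((Ext R (ModuleCat.{0} R) (i+1)).obj (Opposite.op M)).obj N) ↔
    ∀ z : P.complex.X (i+1) ⟶ N, P.complex.d (i+2) (i+1) ≫ z = 0 →
      ∃ w : P.complex.X i ⟶ N, P.complex.d (i+1) i ≫ w = r • z := by
  let K := P.complex.linearYonedaObj R N
  let S := K.sc' i (i+1) (i+2)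
  let e := P.isoExt (R := R) (i+1) N ≪≫ K.homologyIsoSc' i (i+1) (i+2) (by simp) (by simp) ≪≫
    S.moduleCatHomologyIso
  rw [e.toLinearEquiv.annihilator_eq, Module.mem_annihilator]
  constructor
  · intro h z hz
    have h1 : (Submodule.Quotient.mk (r • (⟨z, hz⟩ : LinearMap.ker S.g.hom)) :
        LinearMap.ker S.g.hom ⧸ LinearMap.range S.moduleCatToCycles) = 0 :=
      h (Submodule.Quotient.mk ⟨z, hz⟩)
    obtain ⟨w, hw⟩ := (Submodule.Quotient.mk_eq_zero _).1 h1
    exact ⟨w, congrArg Subtype.val hw⟩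
  · intro h x
    obtain ⟨⟨z, hz⟩, rfl⟩ := Submodule.Quotient.mk_surjective _ x
    obtain ⟨w, hw⟩ := h z hz
    have h1 : (Submodule.Quotient.mk (r • (⟨z, hz⟩ : LinearMap.ker S.g.hom)) :
        LinearMap.ker S.g.hom ⧸ LinearMap.range S.moduleCatToCycles) = 0 :=
      (Submodule.Quotient.mk_eq_zero _).2 ⟨w, Subtype.ext hw⟩
    exact h1

theorem hom_mem {R P N : Type} [CommRing R] [AddCommGroup P] [Module R P] [AddCommGroup N] [Module R N]
    [Module.Finite R P] [Module.Projective R P] (I : Ideal R) (f : P →ₗ[R] N)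
    (hf : ∀ x, f x ∈ I • (⊤ : Submodule R N)) : f ∈ I • (⊤ : Submodule R (P →ₗ[R] N)) := by
  obtain ⟨n, p, s, -, -, hps⟩ := Module.Finite.exists_comp_eq_id_of_projective R P
  have : f = ∑ j : Fin n, LinearMap.smulRightₗ ((LinearMap.proj j).comp s) (f (p (Pi.single j 1))) := by
    ext x
    have h1 : x = p (s x) := (LinearMap.congr_fun hps x).symm
    conv_lhs => rw [h1, ← (Pi.basisFun R (Fin n)).sum_repr (s x)]
    simp
  rw [this]
  refine Submodule.sum_mem _ fun j _ => ?_
  have h2 := Submodule.mem_map_of_mem (f := (LinearMap.smulRightₗ ((LinearMap.proj j).comp s) : N →ₗ[R] P →ₗ[R] N)) (hf (p (Pi.single j 1)))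
  rw [Submodule.map_smul''] at h2
  exact Submodule.smul_mono le_rfl le_top h2

theorem fl {R N : Type} [CommRing R] [IsNoetherianRing R] [IsLocalRing R] [AddCommGroup N] [Module R N]
    [Module.Finite R N] (n : ℕ) : IsFiniteLength R (N ⧸ (maximalIdeal R ^ n • ⊤ : Submodule R N)) := by
  rw [isFiniteLength_iff_isNoetherian_isArtinian]
  refine ⟨inferInstance, ?_⟩
  have hA : IsArtinianRing (R ⧸ maximalIdeal R ^ n) := by
    rw [isArtinianRing_iff_krullDimLE_zero]
    refine Ring.krullDimLE_zero_iff.2 fun I hI => ?_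
    refine Ideal.isMaximal_of_isIntegral_of_isMaximal_comap (R := R) _ ?_
    have h1 := hI.comap (algebraMap R (R ⧸ maximalIdeal R ^ n))
    have : I.comap (algebraMap R (R ⧸ maximalIdeal R ^ n)) = maximalIdeal R := by
      refine le_antisymm (le_maximalIdeal h1.ne_top) ?_
      refine Ideal.IsPrime.le_of_pow_le (n := n) ?_
      intro x hx
      rw [Ideal.mem_comap, Ideal.Quotient.algebraMap_eq, Ideal.Quotient.eq_zero_iff_mem.2 hx]
      exact I.zero_mem
    rw [this]
    exact maximalIdeal.isMaximal R
  have : Module.Finite (R ⧸ maximalIdeal R ^ n) (N ⧸ (maximalIdeal R ^ n • ⊤ : Submodule R N)) :=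
    Module.Finite.of_restrictScalars_finite R _ _
  exact isArtinian_of_surjective_algebraMap (R := R ⧸ maximalIdeal R ^ n)
    (Ideal.Quotient.mk_surjective (I := maximalIdeal R ^ n))

theorem ann_of_finiteLength {R : Type} [CommRing R] [IsNoetherianRing R] [IsLocalRing R] {M : ModuleCat.{0} R} [Module.Finite R M]
    (N : ModuleCat.{0} R) [Module.Finite R N] (i : ℕ) (r : R)
    (h : ∀ L : ModuleCat.{0} R, IsFiniteLength R L → 
    r ∈ Module.annihilator R (((Ext R (ModuleCat.{0} R) (i+1)).obj (Opposite.op M)).obj L)) :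
    r ∈ Module.annihilator R (((Ext R (ModuleCat.{0} R) (i+1)).obj (Opposite.op M)).obj N) := by
  obtain ⟨P, hP⟩ := exists_res M
  simp_rw [ann_iff P] at h ⊢
  intro z hz
  obtain ⟨_, _⟩ := hP i
  obtain ⟨_, _⟩ := hP (i+1)
  let B : Submodule R (P.complex.X (i+1) →ₗ[R] N) := LinearMap.range (LinearMap.lcomp R N (P.complex.d (i+1) i).hom)
  suffices hB : r • z.hom ∈ B by
    obtain ⟨w, hw⟩ := hB
    exact ⟨ModuleCat.ofHom w, by ext1; exact hw⟩
  rw [← Submodule.Quotient.mk_eq_zero, ← Submodule.mem_bot R, ← Ideal.iInf_pow_smul_eq_bot_of_isLocalRing (maximalIdeal R) (Ideal.IsPrime.ne_top'), Submodule.mem_iInf]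
  intro n
  let π : N ⟶ ModuleCat.of R (N ⧸ (maximalIdeal R ^ n • ⊤ : Submodule R N)) := ModuleCat.ofHom (Submodule.mkQ _)
  obtain ⟨w, hw⟩ := h _ (fl n) (z ≫ π) (by rw [← Category.assoc, hz, Limits.zero_comp])
  obtain ⟨w', hw'⟩ := Module.projective_lifting_property π.hom w.hom (Submodule.mkQ_surjective _)
  have key : r • z.hom - w'.comp (P.complex.d (i+1) i).hom ∈ maximalIdeal R ^ n • (⊤ : Submodule R (P.complex.X (i+1) →ₗ[R] N)) := by
    apply hom_mem
    intro x
    rw [← Submodule.Quotient.mk_eq_zero]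
    have h1 := LinearMap.congr_fun hw' ((P.complex.d (i+1) i).hom x)
    have h2 := LinearMap.congr_fun (congrArg ModuleCat.Hom.hom hw) x
    have h3 : π.hom (w' ((P.complex.d (i+1) i).hom x)) = r • π.hom (z.hom x) := h1.trans h2
    change π.hom (r • z.hom x - w' ((P.complex.d (i+1) i).hom x)) = 0
    rw [map_sub, h3, map_smul, sub_self]
  have h4 := Submodule.mem_map_of_mem (f := B.mkQ) key
  rw [Submodule.map_smul''] at h4
  have h5 : B.mkQ (r • z.hom - w'.comp (P.complex.d (i+1) i).hom) = Submodule.Quotient.mk (r • z.hom) := by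
    rw [Submodule.mkQ_apply, Submodule.Quotient.eq, sub_sub_cancel_left]
    exact B.neg_mem ⟨w', rfl⟩
  rw [h5] at h4
  exact Submodule.smul_mono le_rfl le_top h4

/-- Let `R` be a noetherian local ring and `X` a class of finitely
generated `R`-modules. Then `V(⋂_{i>0, M ∈ X, L fin.length} Ann Ext^i(M,L)) =
V(⋂_{i>0, M ∈ X, N f.g.} Ann Ext^i(M,N))`. -/
theorem stmt11 (R : Type) [CommRing R] [IsNoetherianRing R] [IsLocalRing R]
    (X : Set (ModuleCat.{0} R)) (hX : ∀ M ∈ X, Module.Finite R M) :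
    PrimeSpectrum.zeroLocus
        ((⨅ (i : ℕ) (_ : 0 < i) (M : ModuleCat.{0} R) (_ : M ∈ X)
            (L : ModuleCat.{0} R) (_ : IsFiniteLength R L),
            Module.annihilator R (ExtMod R i M L) : Ideal R) : Set R) =
      PrimeSpectrum.zeroLocus
        ((⨅ (i : ℕ) (_ : 0 < i) (M : ModuleCat.{0} R) (_ : M ∈ X)
            (N : ModuleCat.{0} R) (_ : Module.Finite R N),
            Module.annihilator R (ExtMod R i M N) : Ideal R) : Set R) := by
  congr 2
  apply le_antisymm
  · simp only [le_iInf_iff]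
    intro i hi M hM N hN r hr
    have := hX M hM
    obtain ⟨i, rfl⟩ := Nat.exists_eq_succ_of_ne_zero hi.ne'
    refine ann_of_finiteLength N i r fun L hL => ?_
    simp only [Submodule.mem_iInf] at hr
    exact hr (i + 1) hi M hM L hL
  · simp only [le_iInf_iff]
    intro i hi M hM L hL r hr
    simp only [Submodule.mem_iInf] at hr
    have := (isFiniteLength_iff_isNoetherian_isArtinian.1 hL).1
    exact hr i hi M hM L inferInstance

end
end

section
/- Let R be a commutative noetherian local ring and let X be any class of finitely generated R-modules. Then V(⋂_{i>0, L finite length, M ∈ X} Ann_R Ext_R^i(L,M)) = V(⋂_{i>0, N, M ∈ X} Ann_R Ext_R^i(N,M)), where L ranges over all finite-length R-modules and N ranges over all finitely generated R-modules. -/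
open CategoryTheory IsLocalRing

noncomputable section

lemma aux_ann_homology {R : Type} [CommRing R] (S : ShortComplex (ModuleCat.{0} R)) (r : R) :
    r ∈ Module.annihilator R S.homology ↔
      ∀ y : S.X₂, S.g y = 0 → ∃ x : S.X₁, S.f x = r • y := by
  rw [S.moduleCatHomologyIso.toLinearEquiv.annihilator_eq, Module.mem_annihilator]
  change (∀ m : (LinearMap.ker S.g.hom ⧸ LinearMap.range S.moduleCatToCycles), r • m = 0) ↔ _
  constructor
  · intro h y hy
    have := h (Submodule.Quotient.mk ⟨y, hy⟩)
    rw [← Submodule.Quotient.mk_smul, Submodule.Quotient.mk_eq_zero] at this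
    obtain ⟨x, hx⟩ := this
    exact ⟨x, congrArg Subtype.val hx⟩
  · intro h m
    obtain ⟨⟨y, hy⟩, rfl⟩ := Submodule.Quotient.mk_surjective _ m
    rw [← Submodule.Quotient.mk_smul, Submodule.Quotient.mk_eq_zero]
    obtain ⟨x, hx⟩ := h y hy
    exact ⟨x, Subtype.ext hx⟩

lemma aux_bridge {R : Type} [CommRing R] (n : ℕ) (N M : ModuleCat.{0} R) (r : R) :
    r ∈ Module.annihilator R (ExtMod R (n+1) N M) ↔
      ∀ e : Abelian.Ext N M (n+1), r • e = 0 := by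
  let P := projectiveResolution N
  have h1 : r ∈ Module.annihilator R (ExtMod R (n+1) N M) ↔
      ∀ f : P.complex.X (n+1) ⟶ M, P.complex.d (n+2) (n+1) ≫ f = 0 →
        ∃ g : P.complex.X n ⟶ M, P.complex.d (n+1) n ≫ g = r • f := by
    let K := P.complex.linearYonedaObj R M
    have e : ExtMod R (n+1) N M ≅ (K.sc' n (n+1) (n+2)).homology :=
      P.isoExt (n+1) M ≪≫ ShortComplex.homologyMapIso (K.isoSc' n (n+1) (n+2) (by simp) (by simp))
    rw [e.toLinearEquiv.annihilator_eq, aux_ann_homology]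
    rfl
  rw [h1]
  have key : ∀ (f : P.complex.X (n+1) ⟶ M) (hf : P.complex.d (n+2) (n+1) ≫ f = 0),
      r • P.extMk f (n+2) rfl hf = 0 ↔
        ∃ g : P.complex.X n ⟶ M, P.complex.d (n+1) n ≫ g = r • f := by
    intro f hf
    rw [Abelian.Ext.smul_eq_comp_mk₀, P.extMk_comp_mk₀, P.extMk_eq_zero_iff _ _ _ _ n rfl]
    simp
  constructor
  · intro h e
    obtain ⟨f, hf, rfl⟩ := P.extMk_surjective e (n+2) rfl
    exact (key f hf).2 (h f hf)
  · intro h f hf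
    exact (key f hf).1 (h _)

lemma aux_finiteLength {R : Type} [CommRing R] [IsNoetherianRing R] [IsLocalRing R]
    (N : Type) [AddCommGroup N] [Module R N] [Module.Finite R N]
    (h : maximalIdeal R ≤ (Module.annihilator R N).radical) : IsFiniteLength R N := by
  rw [isFiniteLength_iff_isNoetherian_isArtinian]
  refine ⟨inferInstance, ?_⟩
  have hA : IsArtinianRing (R ⧸ Module.annihilator R N) := by
    rw [isArtinianRing_iff_isNoetherianRing_krullDimLE_zero]
    refine ⟨inferInstance, ?_⟩
    rw [Ring.krullDimLE_zero_iff]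
    intro I hI
    have hp := Ideal.comap_isPrime (Ideal.Quotient.mk (Module.annihilator R N)) I
    have hle : maximalIdeal R ≤ I.comap (Ideal.Quotient.mk (Module.annihilator R N)) := by
      refine h.trans (hp.radical_le_iff.2 ?_)
      intro x hx
      rw [Ideal.mem_comap, Ideal.Quotient.eq_zero_iff_mem.2 hx]
      exact I.zero_mem
    have heq := (IsLocalRing.maximalIdeal.isMaximal R).eq_of_le hp.ne_top hle
    have : (I.comap (Ideal.Quotient.mk (Module.annihilator R N))).IsMaximal :=
      heq ▸ IsLocalRing.maximalIdeal.isMaximal R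
    have := Ideal.map_eq_top_or_isMaximal_of_surjective
      (Ideal.Quotient.mk (Module.annihilator R N)) Ideal.Quotient.mk_surjective this
    rw [Ideal.map_comap_of_surjective _ Ideal.Quotient.mk_surjective] at this
    exact this.resolve_left hI.ne_top
  let : Module (R ⧸ Module.annihilator R N) N :=
    Module.IsTorsionBySet.module (Module.isTorsionBySet_annihilator R N)
  have : IsScalarTower R (R ⧸ Module.annihilator R N) N :=
    Module.IsTorsionBySet.isScalarTower (Module.isTorsionBySet_annihilator R N)
  have : Module.Finite (R ⧸ Module.annihilator R N) N := Module.Finite.of_restrictScalars_finite R _ _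
  have : IsArtinian (R ⧸ Module.annihilator R N) N := inferInstance
  exact isArtinian_of_surjective_algebraMap (R := R ⧸ Module.annihilator R N) Ideal.Quotient.mk_surjective

lemma aux_rad {R : Type} [CommRing R] (m A B J : Ideal R) (x : R) (s : ℕ)
    (h : m ≤ (A ⊔ (Ideal.span {x} ⊔ J)).radical) (hAB : A ≤ B) (hx : x ^ s ∈ B) :
    m ≤ (B ⊔ J).radical := by
  refine h.trans ?_
  rw [Ideal.radical_le_radical_iff]
  refine sup_le (hAB.trans (le_sup_left.trans Ideal.le_radical))
    (sup_le ?_ (le_sup_right.trans Ideal.le_radical))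
  rw [Ideal.span_singleton_le_iff_mem]
  exact ⟨s, Ideal.mem_sup_left hx⟩

lemma aux_div {R : Type} [CommRing R] (A C M : ModuleCat.{0} R) (f : A ⟶ A) (g : A ⟶ C)
    (w : f ≫ g = 0) (hS : (ShortComplex.mk f g w).ShortExact) (r b : R) (hf : f = r • 𝟙 A) (j : ℕ)
    (hq : ∀ e' : Abelian.Ext C M (j+1), b • e' = 0) (e : Abelian.Ext A M j) :
    ∃ e2 : Abelian.Ext A M j, b • e = r • e2 := by
  obtain ⟨e2, he2⟩ := Abelian.Ext.contravariant_sequence_exact₁ hS M (n₁ := j+1)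
    (b • e) (by omega) (by
      refine (Abelian.Ext.comp_smul hS.extClass e (by omega) b).trans (hq _))
  refine ⟨e2, he2.symm.trans ?_⟩
  change (Abelian.Ext.mk₀ f).comp e2 _ = _
  rw [hf, Abelian.Ext.mk₀_smul, Abelian.Ext.smul_comp, Abelian.Ext.mk₀_id_comp]

lemma aux_main {R : Type} [CommRing R] [IsNoetherianRing R] [IsLocalRing R]
    (M : ModuleCat.{0} R) [Module.Finite R M] (a : R)
    (ha : ∀ (i : ℕ) (L : ModuleCat.{0} R), IsFiniteLength R L →
      ∀ e : Abelian.Ext L M (i+1), a • e = 0) (l : List R) (hl : ∀ x ∈ l, x ∈ maximalIdeal R) :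
    ∀ (N : ModuleCat.{0} R), Module.Finite R N →
      maximalIdeal R ≤ (Module.annihilator R N ⊔ Ideal.ofList l).radical →
      ∀ (i : ℕ) (e : Abelian.Ext N M (i+1)), a ^ (2 ^ l.length) • e = 0 := by
  induction l with
  | nil =>
    intro N hN h i e
    simp only [Ideal.ofList_nil, bot_le, sup_of_le_left] at h
    simpa using ha i N (aux_finiteLength N h) e
  | cons x l ih =>
    intro N hN h i e
    have ih := ih (fun y hy => hl y (List.mem_cons_of_mem _ hy))
    rw [Ideal.ofList_cons] at h
    have hxm : x ∈ maximalIdeal R := hl x (by simp)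
    obtain ⟨s, hs, hs1⟩ := ((Module.End.eventually_disjoint_ker_pow_range_pow
      (LinearMap.lsmul R N x)).and (Filter.eventually_ge_atTop 1)).exists
    set f := (LinearMap.lsmul R N x) ^ s with hf
    have hfa : ∀ y, f y = x ^ s • y := by
      intro y
      exact congrArg (· y) (map_pow (Algebra.lsmul R R N) x s).symm
    -- the regular quotient
    have hreg : IsSMulRegular (LinearMap.range f) x := by
      rw [isSMulRegular_iff_right_eq_zero_of_smul]
      rintro ⟨y, hy⟩ h0
      have h1 : x • y = 0 := congrArg Subtype.val h0
      have : y ∈ LinearMap.ker f := by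
        rw [LinearMap.mem_ker, hfa]
        obtain ⟨t, rfl⟩ := Nat.exists_eq_add_of_le' hs1
        rw [pow_succ, mul_smul, h1, smul_zero]
      have := Submodule.disjoint_def.1 hs y this hy
      exact Subtype.ext this
    have hann : Module.annihilator R N ≤ Module.annihilator R (LinearMap.range f) :=
      LinearMap.annihilator_le_of_injective (LinearMap.range f).subtype
        (Submodule.injective_subtype _)
    -- range
    have hR : ∀ (i : ℕ) (e : Abelian.Ext (ModuleCat.of R (LinearMap.range f)) M (i+1)),
        a ^ (2 ^ l.length) • e = 0 := by
      intro i e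
      have := Ideal.iInf_pow_smul_eq_bot_of_isLocalRing
        (M := Abelian.Ext (ModuleCat.of R (LinearMap.range f)) M (i+1)) (Ideal.span {x})
        (fun h => (maximalIdeal.isMaximal R).ne_top
          (top_le_iff.1 (h ▸ (Ideal.span_singleton_le_iff_mem _).2 hxm)))
      rw [← Submodule.mem_bot R, ← this, Submodule.mem_iInf]
      intro n
      let S := (ModuleCat.of R (LinearMap.range f)).smulShortComplex (x ^ n)
      have hS : S.ShortExact := (hreg.pow n).smulShortComplex_shortExact
      have hq : ∀ e' : Abelian.Ext S.X₃ M (i+1+1), a ^ (2 ^ l.length) • e' = 0 := by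
        apply ih S.X₃ (inferInstanceAs (Module.Finite R (QuotSMulTop (x^n) (LinearMap.range f))))
        refine aux_rad _ _ _ _ x n h (hann.trans ?_) ?_
        · exact LinearMap.annihilator_le_of_surjective
            (Submodule.mkQ _ : _ →ₗ[R] QuotSMulTop (x^n) (LinearMap.range f))
            (Submodule.mkQ_surjective _)
        · change _ ∈ Module.annihilator R (QuotSMulTop (x^n) (LinearMap.range f))
          rw [Module.mem_annihilator]
          intro m
          obtain ⟨y, rfl⟩ := Submodule.Quotient.mk_surjective _ m
          rw [← Submodule.Quotient.mk_smul, Submodule.Quotient.mk_eq_zero]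
          exact Submodule.smul_mem_pointwise_smul _ _ _ trivial
      obtain ⟨e2, he2⟩ := aux_div (ModuleCat.of R (LinearMap.range f)) _ M S.f S.g S.zero hS (x ^ n) _
        (ModuleCat.smulShortComplex_f_eq_smul_id _ _) _ hq e
      rw [he2]
      exact Submodule.smul_mem_smul (Ideal.pow_mem_pow (Ideal.mem_span_singleton_self x) n) trivial
    have hK : ∀ (i : ℕ) (e : Abelian.Ext (ModuleCat.of R (LinearMap.ker f.rangeRestrict)) M (i+1)),
        a ^ (2 ^ l.length) • e = 0 := by
      apply ih _ (inferInstanceAs (Module.Finite R (LinearMap.ker f.rangeRestrict)))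
      refine aux_rad _ _ _ _ x s h ?_ ?_
      · exact LinearMap.annihilator_le_of_injective (LinearMap.ker f.rangeRestrict).subtype
          (Submodule.injective_subtype _)
      · rw [Module.mem_annihilator]
        rintro ⟨y, hy⟩
        apply Subtype.ext
        rw [LinearMap.ker_rangeRestrict] at hy
        exact (hfa y).symm.trans hy
    have hS := LinearMap.shortExact_shortComplexKer f.surjective_rangeRestrict
    obtain ⟨e2, he2⟩ := Abelian.Ext.contravariant_sequence_exact₂ hS M
      (a ^ (2 ^ l.length) • (show Abelian.Ext (ModuleCat.of R N) M (i+1) from e)) (by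
          rw [Abelian.Ext.comp_smul]; exact hK _ _)
    have : a ^ 2 ^ (x :: l).length = a ^ (2 ^ l.length) * a ^ (2 ^ l.length) := by
      rw [List.length_cons, pow_succ, mul_two, pow_add]
    rw [this, mul_smul]
    refine (congrArg (a ^ (2 ^ l.length) • ·) he2.symm).trans ?_
    change a ^ (2 ^ l.length) • _ = _
    rw [← Abelian.Ext.comp_smul, hR, Abelian.Ext.comp_zero]

/-- Let `R` be a noetherian local ring and `X` a class of finitely
generated `R`-modules. Then `V(⋂_{i>0, L fin.length, M ∈ X} Ann Ext^i(L,M)) =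
V(⋂_{i>0, N f.g., M ∈ X} Ann Ext^i(N,M))`. -/
theorem stmt12 (R : Type) [CommRing R] [IsNoetherianRing R] [IsLocalRing R]
    (X : Set (ModuleCat.{0} R)) (hX : ∀ M ∈ X, Module.Finite R M) :
    PrimeSpectrum.zeroLocus
        ((⨅ (i : ℕ) (_ : 0 < i) (L : ModuleCat.{0} R) (_ : IsFiniteLength R L)
            (M : ModuleCat.{0} R) (_ : M ∈ X),
            Module.annihilator R (ExtMod R i L M) : Ideal R) : Set R) =
      PrimeSpectrum.zeroLocus
        ((⨅ (i : ℕ) (_ : 0 < i) (N : ModuleCat.{0} R) (_ : Module.Finite R N)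
            (M : ModuleCat.{0} R) (_ : M ∈ X),
            Module.annihilator R (ExtMod R i N M) : Ideal R) : Set R) := by
  obtain ⟨l, hl⟩ : ∃ l : List R, Ideal.ofList l = maximalIdeal R := by
    obtain ⟨t, ht⟩ := (isNoetherianRing_iff_ideal_fg R).1 inferInstance (maximalIdeal R)
    refine ⟨t.toList, ?_⟩
    rw [← ht, Ideal.ofList]
    congr 1
    ext y
    simp
  have hlm : ∀ x ∈ l, x ∈ maximalIdeal R := fun x hx => hl ▸ Ideal.subset_span hx
  apply Set.Subset.antisymm
  · refine PrimeSpectrum.zeroLocus_anti_mono ?_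
    intro a ha
    simp only [SetLike.mem_coe, Submodule.mem_iInf] at ha ⊢
    intro i hi L hL M hM
    have := (isFiniteLength_iff_isNoetherian_isArtinian.1 hL).1
    exact ha i hi L inferInstance M hM
  · intro p hp a ha
    refine p.2.mem_of_pow_mem (2 ^ l.length) (hp ?_)
    simp only [SetLike.mem_coe, Submodule.mem_iInf] at ha ⊢
    intro i hi N hN M hM
    obtain ⟨i, rfl⟩ := Nat.exists_eq_add_of_le' hi
    have := hX M hM
    rw [aux_bridge]
    refine aux_main M a (fun i L hL => (aux_bridge _ _ _ _).1 (ha _ i.succ_pos L hL M hM)) l hlm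
      N hN ?_ i
    rw [hl]
    exact le_sup_right.trans Ideal.le_radical

end
end

section
/- Let R be a commutative noetherian ring and M a finitely generated R-module. Then the following three subsets of Spec R coincide: (i) the nonfree locus NF(M), i.e., the set of prime ideals p such that M_p is not a free R_p-module; (ii) the union over all integers i > 0 and all finitely generated R-modules N of the supports of Tor_i^R(M,N); (iii) V(⋂_{i>0, N} Ann_R Tor_i^R(M,N)), the set of prime ideals containing the intersection of the annihilators of Tor_i^R(M,N) over all i > 0 and all finitely generated R-modules N. -/
open CategoryTheory IsLocalRing

noncomputable section

open TensorProduct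

theorem sc_equiv {R : Type} [CommRing R] (S : ShortComplex (ModuleCat.{0} R)) :
    ∃ q : LinearMap.ker S.g.hom →ₗ[R] S.homology, Function.Surjective q ∧
      ∀ z, q z = 0 ↔ ∃ w, S.f.hom w = z.1 := by
  refine ⟨S.moduleCatHomologyIso.toLinearEquiv.symm.toLinearMap ∘ₗ
    (LinearMap.range S.moduleCatToCycles).mkQ, ?_, ?_⟩
  · exact S.moduleCatHomologyIso.toLinearEquiv.symm.surjective.comp (Submodule.mkQ_surjective _)
  · intro z
    refine (LinearEquiv.map_eq_zero_iff S.moduleCatHomologyIso.toLinearEquiv.symm).trans ?_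
    refine (Submodule.Quotient.mk_eq_zero (LinearMap.range S.moduleCatToCycles)).trans ?_
    simp only [LinearMap.mem_range, Subtype.ext_iff]
    rfl

theorem tor_equiv {R : Type} [CommRing R] (M N : ModuleCat.{0} R) (P : ProjectiveResolution N)
    (n : ℕ) :
    ∃ q : LinearMap.ker ((P.complex.d (n+1) n).hom.lTensor M) →ₗ[R] TorMod R (n+1) M N,
      Function.Surjective q ∧
      ∀ z, q z = 0 ↔ ∃ w, (P.complex.d (n+2) (n+1)).hom.lTensor M w = z.1 := by
  let F := (MonoidalCategory.tensoringLeft (ModuleCat.{0} R)).obj M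
  let K := (F.mapHomologicalComplex (ComplexShape.down ℕ)).obj P.complex
  let e : TorMod R (n+1) M N ≅ (K.sc' (n+2) (n+1) n).homology :=
    P.isoLeftDerivedObj F (n+1) ≪≫
      ShortComplex.homologyMapIso (K.isoSc' (n+2) (n+1) n (by simp) (by simp))
  obtain ⟨q, hq, h⟩ := sc_equiv (K.sc' (n+2) (n+1) n)
  refine ⟨e.toLinearEquiv.symm.toLinearMap ∘ₗ q, ?_, ?_⟩
  · exact e.toLinearEquiv.symm.surjective.comp hq
  · intro z
    exact (LinearEquiv.map_eq_zero_iff e.toLinearEquiv.symm).trans (h z)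

theorem res_exact {R : Type} [CommRing R] {N : ModuleCat.{0} R} (P : ProjectiveResolution N)
    (n : ℕ) : Function.Exact (P.complex.d (n+2) (n+1)).hom (P.complex.d (n+1) n).hom :=
  (ShortComplex.ShortExact.moduleCat_exact_iff_function_exact _).1 (P.exact_succ n)

theorem res_exact0 {R : Type} [CommRing R] {N : ModuleCat.{0} R} (P : ProjectiveResolution N) :
    ∃ π : P.complex.X 0 →ₗ[R] N, Function.Surjective π ∧
      Function.Exact (P.complex.d 1 0).hom π :=
  ⟨(P.π.f 0).hom, (ModuleCat.epi_iff_surjective (P.π.f 0)).1 inferInstance,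
    (ShortComplex.ShortExact.moduleCat_exact_iff_function_exact _).1 P.exact₀⟩

theorem tor_killed {R : Type} [CommRing R] (M : ModuleCat.{0} R) (n : ℕ) (a : M →ₗ[R] (Fin n → R))
    (b : (Fin n → R) →ₗ[R] M) (r : R) (h : b ∘ₗ a = r • LinearMap.id) (i : ℕ)
    (N : ModuleCat.{0} R) : r ∈ Module.annihilator R (TorMod R (i+1) M N) := by
  let P := projectiveResolution N
  obtain ⟨q, hq, hz⟩ := tor_equiv M N P i
  rw [Module.mem_annihilator]
  intro t
  obtain ⟨z, rfl⟩ := hq t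
  rw [← map_smul, hz]
  have hc (X Y : ModuleCat.{0} R) (f : X →ₗ[R] Y) {A B : Type} [AddCommGroup A] [Module R A]
      [AddCommGroup B] [Module R B] (g : A →ₗ[R] B) (x : X ⊗[R] A) :
      g.lTensor Y (f.rTensor A x) = f.rTensor B (g.lTensor X x) := by
    rw [← LinearMap.comp_apply, ← LinearMap.comp_apply, LinearMap.lTensor_comp_rTensor,
      LinearMap.rTensor_comp_lTensor]
  have hex := Module.Flat.lTensor_exact (Fin n → R) (res_exact P i)
  obtain ⟨w, hw⟩ := (hex (a.rTensor _ z.1)).1 (by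
    rw [hc M (ModuleCat.of R (Fin n → R)) a, LinearMap.mem_ker.1 z.2, map_zero])
  refine ⟨b.rTensor _ w, ?_⟩
  rw [hc (ModuleCat.of R (Fin n → R)) M b]
  erw [hw]
  rw [← LinearMap.comp_apply, ← LinearMap.rTensor_comp, h, LinearMap.rTensor_smul]
  simp

theorem exists_ab {R : Type} [CommRing R] [IsNoetherianRing R] (M : Type) [AddCommGroup M]
    [Module R M] [Module.Finite R M] (p : Ideal R) [p.IsPrime]
    (hf : Module.Free (Localization.AtPrime p) (LocalizedModule p.primeCompl M)) :
    ∃ (n : ℕ) (a : M →ₗ[R] (Fin n → R)) (b : (Fin n → R) →ₗ[R] M) (r : R), r ∉ p ∧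
      b ∘ₗ a = r • LinearMap.id := by
  obtain ⟨n, b, hb⟩ := Module.Finite.exists_fin' R M
  let S := p.primeCompl
  let fF := LocalizedModule.mkLinearMap S (Fin n → R)
  let fM := LocalizedModule.mkLinearMap S M
  let bp := LocalizedModule.map S b
  have hbp : Function.Surjective bp := LocalizedModule.map_surjective S b hb
  obtain ⟨σ, hσ⟩ := Module.projective_lifting_property bp LinearMap.id hbp
  have : Module.FinitePresentation R M := Module.finitePresentation_of_finite R M
  obtain ⟨a, s, ha⟩ := Module.FinitePresentation.exists_lift_of_isLocalizedModule S fF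
    ((σ.restrictScalars R) ∘ₗ fM)
  have h1 : fM ∘ₗ (b ∘ₗ a) = fM ∘ₗ (s.1 • LinearMap.id) := by
    ext x
    have h2 : fM (b (a x)) = bp (fF (a x)) := by
      simp [fM, fF, bp]
    have h3 : fF (a x) = s.1 • σ (fM x) := by
      exact congr($ha x)
    have h4 : bp (σ (fM x)) = fM x := congr($hσ (fM x))
    have h5 : bp (s.1 • σ (fM x)) = s.1 • bp (σ (fM x)) :=
      (bp.restrictScalars R).map_smul s.1 _
    simp only [LinearMap.comp_apply, LinearMap.smul_apply, LinearMap.id_apply]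
    rw [h2, h3, h5, h4, map_smul]
  obtain ⟨t, ht⟩ := Module.Finite.exists_smul_of_comp_eq_of_isLocalizedModule S fM _ _ h1
  refine ⟨n, t.1 • a, b, t.1 * s.1, (t * s).2, ?_⟩
  rw [LinearMap.comp_smul, mul_smul]
  exact ht

/-- Local criterion: elementwise form. -/
theorem free_of_elementwise {R : Type} [CommRing R] [IsNoetherianRing R] (M : Type)
    [AddCommGroup M]
    [Module R M] [Module.Finite R M] (p : Ideal R) [p.IsPrime]
    (H : ∀ x : M ⊗[R] p, p.subtype.lTensor M x = 0 → ∃ s ∉ p, s • x = 0) :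
    Module.Free (Localization.AtPrime p) (LocalizedModule p.primeCompl M) := by
  let Rp := Localization.AtPrime p
  let Mp := LocalizedModule p.primeCompl M
  let m := maximalIdeal Rp
  have : IsNoetherianRing Rp := IsLocalization.isNoetherianRing p.primeCompl _ inferInstance
  have : Module.FinitePresentation Rp Mp := Module.finitePresentation_of_finite _ _
  apply Module.free_of_maximalIdeal_rTensor_injective
  have hmem : ∀ a : p, algebraMap R Rp a.1 ∈ m := fun a =>
    (IsLocalization.AtPrime.to_map_mem_maximal_iff Rp p a.1).2 a.2
  let φ : M ⊗[R] p →ₗ[R] m ⊗[Rp] Mp := TensorProduct.lift (LinearMap.mk₂ R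
    (fun x a => (⟨algebraMap R Rp a.1, hmem a⟩ : m) ⊗ₜ[Rp] LocalizedModule.mkLinearMap p.primeCompl M x)
    (by intros; rw [map_add, TensorProduct.tmul_add])
    (by intros; rw [map_smul, TensorProduct.tmul_smul])
    (by
      intros; rw [← TensorProduct.add_tmul]; congr 1; ext; simp)
    (by
      intro c x a
      rw [TensorProduct.smul_tmul']; congr 1; ext; simp [Algebra.smul_def]))
  have hφ : ∀ y, ∃ x, ∃ s ∉ p, s • y = φ x := by
    intro y
    induction y using TensorProduct.induction_on with
    | zero => exact ⟨0, 1, p.primeCompl.one_mem, by simp⟩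
    | tmul a x =>
      obtain ⟨⟨r, s⟩, hrs⟩ := IsLocalization.surj p.primeCompl (a.1 : Rp)
      obtain ⟨⟨x', t⟩, hxt⟩ := IsLocalizedModule.surj p.primeCompl
        (LocalizedModule.mkLinearMap p.primeCompl M) x
      have hr : r ∈ p := by
        rw [← IsLocalization.AtPrime.to_map_mem_maximal_iff Rp p r]
        rw [← hrs]
        exact Ideal.mul_mem_right _ _ a.2
      refine ⟨x' ⊗ₜ ⟨r, hr⟩, s.1 * t.1, (s * t).2, ?_⟩
      have e1 : s.1 • a = (⟨algebraMap R Rp r, hmem ⟨r, hr⟩⟩ : m) := by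
        ext
        simp only [Submodule.coe_smul_of_tower, Algebra.smul_def]
        rw [← hrs, mul_comm]
      have e2 : t.1 • x = LocalizedModule.mkLinearMap p.primeCompl M x' := hxt
      have e3 : φ (x' ⊗ₜ ⟨r, hr⟩) = (⟨algebraMap R Rp r, hmem ⟨r, hr⟩⟩ : m) ⊗ₜ[Rp]
        LocalizedModule.mkLinearMap p.primeCompl M x' := rfl
      rw [e3, ← e1, ← e2, mul_comm s.1, mul_smul, TensorProduct.tmul_smul, TensorProduct.smul_tmul']
    | add y z hy hz =>
      obtain ⟨x, s, hs, h⟩ := hy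
      obtain ⟨x', s', hs', h'⟩ := hz
      refine ⟨s' • x + s • x', s * s', p.primeCompl.mul_mem hs hs', ?_⟩
      rw [map_add, map_smul, map_smul, ← h, ← h', smul_add, smul_smul, smul_smul, mul_comm s' s]
  have hinc : ∀ x, (TensorProduct.lid Rp Mp) (m.subtype.rTensor Mp (φ x)) =
      LocalizedModule.mkLinearMap p.primeCompl M ((TensorProduct.rid R M) (p.subtype.lTensor M x)) := by
    intro x
    induction x using TensorProduct.induction_on with
    | zero => simp
    | tmul x a => simp [φ]
    | add y z hy hz => simp only [map_add, hy, hz]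
  rw [injective_iff_map_eq_zero]
  intro y hy
  obtain ⟨x, s, hs, h⟩ := hφ y
  have h1 := hinc x
  rw [← h] at h1
  have h2 : m.subtype.rTensor Mp (s • y) = s • m.subtype.rTensor Mp y :=
    ((m.subtype.rTensor Mp).restrictScalars R).map_smul s y
  rw [h2, hy, smul_zero, map_zero] at h1
  obtain ⟨t, ht⟩ := (IsLocalizedModule.eq_zero_iff p.primeCompl
    (LocalizedModule.mkLinearMap p.primeCompl M)).1 h1.symm
  have h3 : p.subtype.lTensor M (t.1 • x) = 0 := by
    apply (TensorProduct.rid R M).injective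
    rw [map_smul, map_smul, map_zero]
    exact ht
  obtain ⟨u, hu, h4⟩ := H _ h3
  have h5 : (u * t.1 * s) • y = 0 := by
    rw [mul_smul, mul_smul, h, ← map_smul, ← map_smul, h4, map_zero]
  have h6 : IsUnit (algebraMap R Rp (u * t.1 * s)) :=
    IsLocalization.map_units Rp (⟨u * t.1 * s,
      p.primeCompl.mul_mem (p.primeCompl.mul_mem hu t.2) hs⟩ : p.primeCompl)
  rw [← algebraMap_smul Rp] at h5
  exact (h6.smul_eq_zero).1 h5

theorem tor_kernel {R : Type} [CommRing R] (M : ModuleCat.{0} R) (p : PrimeSpectrum R)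
    (h : p ∉ Module.support R (TorMod R 1 M (ModuleCat.of R (R ⧸ p.asIdeal))))
    (x : M ⊗[R] p.asIdeal) (hx : p.asIdeal.subtype.lTensor M x = 0) :
    ∃ s ∉ p.asIdeal, s • x = 0 := by
  let N := ModuleCat.of R (R ⧸ p.asIdeal)
  let P := projectiveResolution N
  obtain ⟨q, hq, hz⟩ := tor_equiv M N P 0
  obtain ⟨π, hπ, hex⟩ := res_exact0 P
  have : Module.Projective R (P.complex.X 0) :=
    (IsProjective.iff_projective (P.complex.X 0)).2 (P.projective 0)
  let ρ : R →ₗ[R] N := p.asIdeal.mkQ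
  have hρ : Function.Surjective ρ := Submodule.mkQ_surjective _
  have hρ0 : ∀ a, ρ a = 0 ↔ a ∈ p.asIdeal := fun a => Submodule.Quotient.mk_eq_zero _
  obtain ⟨u, hu⟩ := Module.projective_lifting_property π ρ hπ
  obtain ⟨v, hv⟩ := Module.projective_lifting_property ρ π hρ
  have hu' : ∀ a, π (u a) = ρ a := fun a => congr($hu a)
  have hv' : ∀ a, ρ (v a) = π a := fun a => congr($hv a)
  let K := LinearMap.ker π
  let u' : p.asIdeal →ₗ[R] K := (u ∘ₗ p.asIdeal.subtype).codRestrict K (fun a => by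
    simp only [K, LinearMap.mem_ker, LinearMap.comp_apply, hu', hρ0]
    exact a.2)
  let v' : K →ₗ[R] p.asIdeal := (v ∘ₗ K.subtype).codRestrict p.asIdeal (fun a => by
    rw [← hρ0, LinearMap.comp_apply, hv']
    exact a.2)
  let k : R →ₗ[R] p.asIdeal := (LinearMap.id - v ∘ₗ u).codRestrict p.asIdeal (fun a => by
    rw [← hρ0, LinearMap.sub_apply, map_sub, LinearMap.comp_apply, hv', hu']
    exact sub_self _)
  have hid : k ∘ₗ p.asIdeal.subtype + v' ∘ₗ u' = LinearMap.id := by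
    ext a
    simp [k, v', u']
  have hx1 : x = v'.lTensor M (u'.lTensor M x) := by
    have := congr($(congrArg (LinearMap.lTensor (M := M)) hid) x)
    rw [LinearMap.lTensor_add, LinearMap.lTensor_comp, LinearMap.lTensor_comp,
      LinearMap.add_apply, LinearMap.comp_apply, LinearMap.comp_apply, hx, map_zero, zero_add,
      LinearMap.lTensor_id] at this
    exact this.symm
  let d : P.complex.X 1 →ₗ[R] K := (P.complex.d 1 0).hom.codRestrict K
    (fun a => hex.apply_apply_eq_zero a)
  have hd : Function.Surjective d := by
    rintro ⟨y, hy⟩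
    obtain ⟨z, rfl⟩ := (hex y).1 hy
    exact ⟨z, rfl⟩
  have hKd : K.subtype ∘ₗ d = (P.complex.d 1 0).hom := rfl
  obtain ⟨z, hzx⟩ := LinearMap.lTensor_surjective M hd (u'.lTensor M x)
  have hKu : K.subtype ∘ₗ u' = u ∘ₗ p.asIdeal.subtype := rfl
  have hz0 : (P.complex.d 1 0).hom.lTensor M z = 0 := by
    rw [← hKd, LinearMap.lTensor_comp, LinearMap.comp_apply, hzx, ← LinearMap.comp_apply,
      ← LinearMap.lTensor_comp, hKu, LinearMap.lTensor_comp, LinearMap.comp_apply, hx, map_zero]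
  obtain ⟨s, hs, hst⟩ := Module.notMem_support_iff'.1 h (q ⟨z, hz0⟩)
  refine ⟨s, hs, ?_⟩
  rw [← map_smul, hz] at hst
  obtain ⟨w, hw⟩ := hst
  have hdd : d ∘ₗ (P.complex.d 2 1).hom = 0 := by
    ext a
    exact congrArg Subtype.val (Subtype.ext ((res_exact P 0).apply_apply_eq_zero a))
  have hw' : (P.complex.d 2 1).hom.lTensor M w = s • z := hw
  rw [hx1, ← hzx, ← map_smul, ← map_smul, ← hw', ← LinearMap.comp_apply (LinearMap.lTensor M d),
    ← LinearMap.lTensor_comp, hdd]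
  simp

/-- Let `R` be a noetherian commutative ring and `M` a finitely generated
`R`-module. Then the nonfree locus of `M`, the union of the supports of `Tor_i(M,N)` over
`i > 0` and finitely generated `N`, and `V(⋂_{i>0, N} Ann Tor_i(M,N))` all coincide. -/
theorem stmt14 (R : Type) [CommRing R] [IsNoetherianRing R]
    (M : ModuleCat.{0} R) (hM : Module.Finite R M) :
    nonfreeLocus R M =
        (⋃ (i : ℕ) (_ : 0 < i) (N : ModuleCat.{0} R) (_ : Module.Finite R N),
          Module.support R (TorMod R i M N)) ∧
    nonfreeLocus R M = PrimeSpectrum.zeroLocus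
        ((⨅ (i : ℕ) (_ : 0 < i) (N : ModuleCat.{0} R) (_ : Module.Finite R N),
          Module.annihilator R (TorMod R i M N) : Ideal R) : Set R) := by
  have hBC : (⋃ (i : ℕ) (_ : 0 < i) (N : ModuleCat.{0} R) (_ : Module.Finite R N),
          Module.support R (TorMod R i M N)) ⊆ PrimeSpectrum.zeroLocus
        ((⨅ (i : ℕ) (_ : 0 < i) (N : ModuleCat.{0} R) (_ : Module.Finite R N),
          Module.annihilator R (TorMod R i M N) : Ideal R) : Set R) := by
    simp only [Set.iUnion_subset_iff]
    intro i hi N hN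
    refine fun p hp => PrimeSpectrum.zeroLocus_anti_mono_ideal
      ((iInf₂_le i hi).trans (iInf₂_le N hN)) (Module.annihilator_le_of_mem_support hp)
  have hCA : PrimeSpectrum.zeroLocus
        ((⨅ (i : ℕ) (_ : 0 < i) (N : ModuleCat.{0} R) (_ : Module.Finite R N),
          Module.annihilator R (TorMod R i M N) : Ideal R) : Set R) ⊆ nonfreeLocus R M := by
    intro p hp hf
    obtain ⟨n, a, b, r, hr, hab⟩ := exists_ab M p.asIdeal hf
    apply hr
    apply hp
    simp only [SetLike.mem_coe, Ideal.mem_iInf]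
    intro i hi N _
    obtain ⟨j, rfl⟩ := Nat.exists_eq_add_of_lt hi
    simpa using tor_killed M n a b r hab (0 + j) N
  have hAB : nonfreeLocus R M ⊆
      (⋃ (i : ℕ) (_ : 0 < i) (N : ModuleCat.{0} R) (_ : Module.Finite R N),
          Module.support R (TorMod R i M N)) := by
    intro p hp
    by_contra hn
    simp only [Set.mem_iUnion, not_exists] at hn
    have h1 := hn 1 one_pos (ModuleCat.of R (R ⧸ p.asIdeal))
      (inferInstanceAs (Module.Finite R (R ⧸ p.asIdeal)))
    exact hp (free_of_elementwise M p.asIdeal (tor_kernel M p h1))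
  exact ⟨hAB.antisymm (hBC.trans hCA), (hAB.trans hBC).antisymm hCA⟩

end
end

section
/- Let R be a commutative noetherian ring and M a finitely generated R-module. Then the following three subsets of Spec R coincide: (i) the nonfree locus NF(M), i.e., the set of prime ideals p such that M_p is not a free R_p-module; (ii) the union over all integers i > 0 and all finitely generated R-modules N of the supports of Ext_R^i(M,N); (iii) V(⋂_{i>0, N} Ann_R Ext_R^i(M,N)), the set of prime ideals containing the intersection of the annihilators of Ext_R^i(M,N) over all i > 0 and all finitely generated R-modules N. -/
open CategoryTheory IsLocalRing

noncomputable section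

lemma homPi_zero_iff {R : Type} [CommRing R] (K : CochainComplex (ModuleCat.{0} R) ℕ) (n : ℕ)
    (z : K.cycles (n+1)) :
    K.homologyπ (n+1) z = 0 ↔ ∃ y, K.d n (n+1) y = K.iCycles (n+1) z := by
  have hinj : Function.Injective (K.iCycles (n+1)) :=
    (ModuleCat.mono_iff_injective _).1 inferInstance
  have h1 : ∀ y, K.iCycles (n+1) (K.toCycles n (n+1) y) = K.d n (n+1) y := fun y => by
    rw [← ModuleCat.comp_apply, HomologicalComplex.toCycles_i]
  constructor
  · intro h
    have hex := ShortComplex.exact_of_g_is_cokernel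
      (ShortComplex.mk (K.toCycles n (n+1)) (K.homologyπ (n+1)) (by simp))
      (K.homologyIsCokernel n (n+1) (by simp))
    rw [ShortComplex.moduleCat_exact_iff] at hex
    obtain ⟨y, hy⟩ := hex z h
    exact ⟨y, by rw [← h1]; exact congrArg _ hy⟩
  · rintro ⟨y, hy⟩
    rw [← h1] at hy
    rw [← hinj hy, ← ModuleCat.comp_apply, HomologicalComplex.toCycles_comp_homologyπ]
    rfl

lemma ext_class {R : Type} [CommRing R] {M : ModuleCat.{0} R} (P : ProjectiveResolution M)
    (N : ModuleCat.{0} R) (n : ℕ) (φ : P.complex.X (n+1) ⟶ N)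
    (hφ : P.complex.d (n+2) (n+1) ≫ φ = 0) :
    ∃ c : ExtMod R (n+1) M N, ∀ r : R, r • c = 0 →
      ∃ ψ : P.complex.X n ⟶ N, P.complex.d (n+1) n ≫ ψ = r • φ := by
  let K := P.complex.linearYonedaObj R N
  let e : ExtMod R (n+1) M N ≅ K.homology (n+1) := P.isoExt (R := R) (n+1) N
  let k : ModuleCat.of R R ⟶ K.X (n+1) := ModuleCat.ofHom (LinearMap.toSpanSingleton R (K.X (n+1)) φ)
  have hk : k ≫ K.d (n+1) (n+2) = 0 := by
    ext
    simp only [k, K, ChainComplex.linearYonedaObj_d]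
    change Linear.leftComp R N (P.complex.d (n + 2) (n + 1)) ((1 : R) • φ) = 0
    rw [one_smul]
    exact hφ
  let z : K.cycles (n+1) := K.liftCycles k (n+2) (by simp) hk (1 : R)
  have hz : K.iCycles (n+1) z = φ := by
    simp only [z]
    rw [← ModuleCat.comp_apply, HomologicalComplex.liftCycles_i]
    exact LinearMap.toSpanSingleton_apply_one _ _ _
  refine ⟨e.inv (K.homologyπ (n+1) z), fun r hr => ?_⟩
  have h2 : K.homologyπ (n+1) (r • z) = 0 := by
    have := congrArg e.hom hr
    rw [map_smul, map_zero, ← ModuleCat.comp_apply, e.inv_hom_id] at this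
    rw [map_smul]
    exact this
  obtain ⟨y, hy⟩ := (homPi_zero_iff K n _).1 h2
  rw [map_smul, hz] at hy
  refine ⟨y, Eq.trans ?_ hy⟩
  simp only [K, ChainComplex.linearYonedaObj_d]
  rfl

lemma ext_smul_zero {R : Type} [CommRing R] {M : ModuleCat.{0} R} (P : ProjectiveResolution M)
    (N : ModuleCat.{0} R) (n : ℕ) (r : R)
    (H : ∀ φ : P.complex.X (n+1) ⟶ N, P.complex.d (n+2) (n+1) ≫ φ = 0 →
      ∃ ψ : P.complex.X n ⟶ N, P.complex.d (n+1) n ≫ ψ = r • φ) (c : ExtMod R (n+1) M N) :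
    r • c = 0 := by
  let K := P.complex.linearYonedaObj R N
  let e : ExtMod R (n+1) M N ≅ K.homology (n+1) := P.isoExt (R := R) (n+1) N
  obtain ⟨z, hz⟩ := (ModuleCat.epi_iff_surjective (K.homologyπ (n+1))).1 inferInstance (e.hom c)
  have hd : K.d (n+1) (n+2) (K.iCycles (n+1) z) = 0 := by
    rw [← ModuleCat.comp_apply, HomologicalComplex.iCycles_d]; rfl
  have hd' : P.complex.d (n+2) (n+1) ≫ (show P.complex.X (n+1) ⟶ N from K.iCycles (n+1) z) = 0 := by
    simp only [K, ChainComplex.linearYonedaObj_d] at hd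
    exact hd
  obtain ⟨ψ, hψ⟩ := H _ hd'
  have h0 : K.homologyπ (n+1) (r • z) = 0 := by
    rw [homPi_zero_iff]
    refine ⟨ψ, ?_⟩
    rw [map_smul]
    refine Eq.trans ?_ hψ
    simp only [K, ChainComplex.linearYonedaObj_d]
    rfl
  rw [map_smul, hz, ← map_smul] at h0
  have := congrArg e.inv h0
  rw [map_zero, ← ModuleCat.comp_apply, e.hom_inv_id] at this
  exact this

lemma ann_of_factor {R : Type} [CommRing R] {M Q : ModuleCat.{0} R} [Projective Q] (r : R)
    (h : M ⟶ Q) (g : Q ⟶ M) (hr : h ≫ g = r • 𝟙 M) (n : ℕ) (N : ModuleCat.{0} R)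
    (c : ExtMod R (n+1) M N) : r • c = 0 := by
  let P := projectiveResolution M
  let S := ProjectiveResolution.self Q
  have ho : Homotopy (r • 𝟙 P.complex) (ProjectiveResolution.lift h P S ≫
      ProjectiveResolution.lift g S P) := by
    refine ProjectiveResolution.liftHomotopy (h ≫ g) _ _ ?_ ?_
    · rw [hr]
      apply HomologicalComplex.to_single_hom_ext
      simp
      exact ((Linear.comp_smul _ _ _ (P.π.f 0) r (𝟙 M)).trans
        (congrArg (r • ·) (Category.comp_id (P.π.f 0)))).symm
    · simp
  refine ext_smul_zero P N n r (fun φ hφ => ⟨ho.hom n (n+1) ≫ φ, ?_⟩) c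
  have hc := ho.comm (n+1)
  rw [dNext_eq _ (show (ComplexShape.down ℕ).Rel (n+1) n by simp),
    prevD_eq _ (show (ComplexShape.down ℕ).Rel (n+2) (n+1) by simp)] at hc
  have hz : (ProjectiveResolution.lift h P S).f (n+1) = 0 :=
    (HomologicalComplex.isZero_single_obj_X
      (ComplexShape.down ℕ) 0 Q (n + 1) (by simp)).eq_of_tgt _ _
  have := congrArg (· ≫ φ) hc
  simp [hz, hφ] at this
  exact this.symm

lemma exists_class {R : Type} [CommRing R] {M : ModuleCat.{0} R} {F : Type} [AddCommGroup F]
    [Module R F] (f : F →ₗ[R] M) (hf : Function.Surjective f) :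
    ∃ c : ExtMod R 1 M (ModuleCat.of R (LinearMap.ker f)), ∀ r : R, r • c = 0 →
      ∃ h : M →ₗ[R] F, f ∘ₗ h = r • LinearMap.id := by
  let P := projectiveResolution M
  let π : P.complex.X 0 ⟶ M := P.π.f 0
  have hπ : Function.Surjective π := (ModuleCat.epi_iff_surjective π).1 (inferInstanceAs (Epi (P.π.f 0)))
  have hdπ : P.complex.d 1 0 ≫ π = 0 := P.complex_d_comp_π_f_zero
  have hex : ∀ x : P.complex.X 0, π x = 0 → ∃ y, P.complex.d 1 0 y = x := by
    have := P.exact₀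
    rw [ShortComplex.moduleCat_exact_iff] at this
    exact this
  have : Epi (ModuleCat.ofHom f) := (ModuleCat.epi_iff_surjective _).2 hf
  let a : P.complex.X 0 ⟶ ModuleCat.of R F := Projective.factorThru π (ModuleCat.ofHom f)
  have ha : a ≫ ModuleCat.ofHom f = π := Projective.factorThru_comp _ _
  have ha' : ∀ x, f (a x) = π x := fun x => congr($ha x)
  let φ : P.complex.X 1 ⟶ ModuleCat.of R (LinearMap.ker f) :=
    ModuleCat.ofHom ((P.complex.d 1 0 ≫ a).hom.codRestrict _ (fun x => by
      have := congr($hdπ x)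
      simpa [ha'] using this))
  obtain ⟨c, hc⟩ := ext_class P (ModuleCat.of R (LinearMap.ker f)) 0 φ (by
    ext x
    have h0 : P.complex.d 1 0 (P.complex.d 2 1 x) = 0 := by
      rw [← ModuleCat.comp_apply, P.complex.d_comp_d 2 1 0]
      rfl
    change a (P.complex.d 1 0 (P.complex.d 2 1 x)) = 0
    rw [h0, map_zero])
  refine ⟨c, fun r hr => ?_⟩
  obtain ⟨ψ, hψ⟩ := hc r hr
  let b : P.complex.X 0 →ₗ[R] F := r • a.hom - (LinearMap.ker f).subtype ∘ₗ ψ.hom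
  have hb : LinearMap.ker π.hom ≤ LinearMap.ker b := by
    intro x hx
    obtain ⟨y, rfl⟩ := hex x hx
    have := congr(($hψ y : LinearMap.ker f).1)
    simp only [LinearMap.mem_ker, b, LinearMap.sub_apply, LinearMap.smul_apply,
      LinearMap.comp_apply, Submodule.subtype_apply]
    rw [sub_eq_zero]
    exact this.symm
  let h : M →ₗ[R] F := ((LinearMap.ker π.hom).liftQ b hb) ∘ₗ
    (π.hom.quotKerEquivOfSurjective hπ).symm.toLinearMap
  have hh : ∀ x, h (π x) = b x := by
    intro x
    have : (π.hom.quotKerEquivOfSurjective hπ).symm (π x) = Submodule.Quotient.mk x := by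
      rw [LinearEquiv.symm_apply_eq]; rfl
    simp only [h, LinearMap.comp_apply, LinearEquiv.coe_coe]
    rw [this]
    simp
  refine ⟨h, LinearMap.ext fun m => ?_⟩
  obtain ⟨x, rfl⟩ := hπ m
  have h3 : f (ψ x).1 = 0 := (ψ x).2
  simp only [LinearMap.comp_apply, hh, b, LinearMap.sub_apply, map_sub, LinearMap.smul_apply, map_smul, Submodule.subtype_apply]
  erw [h3, ha']
  simp

lemma free_iff_factor {R : Type} [CommRing R] [IsNoetherianRing R] {M F : Type} [AddCommGroup M]
    [Module R M] [Module.Finite R M] [AddCommGroup F] [Module R F] [Module.Free R F]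
    [Module.Finite R F]
    (f : F →ₗ[R] M) (hf : Function.Surjective f) (p : Ideal R) [p.IsPrime] :
    Module.Free (Localization.AtPrime p) (LocalizedModule p.primeCompl M) ↔
      ∃ r ∉ p, ∃ h : M →ₗ[R] F, f ∘ₗ h = r • LinearMap.id := by
  let S := p.primeCompl
  let iM := LocalizedModule.mkLinearMap S M
  let iF := LocalizedModule.mkLinearMap S F
  let fS := LocalizedModule.map S f
  have hfS : Function.Surjective fS := LocalizedModule.map_surjective S f hf
  constructor
  · intro _
    obtain ⟨s, hs⟩ := Module.projective_lifting_property fS LinearMap.id hfS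
    have : Module.FinitePresentation R M := Module.finitePresentation_of_finite R M
    obtain ⟨h, u, hu⟩ := Module.FinitePresentation.exists_lift_of_isLocalizedModule S iF
      ((s.restrictScalars R) ∘ₗ iM)
    have h1 : iM ∘ₗ (f ∘ₗ h) = iM ∘ₗ ((u : R) • LinearMap.id) := by
      ext m
      have h2 := congrArg fS (congr($hu m))
      have h3 : ∀ x, fS (iF x) = iM (f x) := fun x => by
        simp [fS, iF, iM, LocalizedModule.map_mk]
      have h4 : fS (s (iM m)) = iM m := congr($hs (iM m))
      simp only [LinearMap.comp_apply, h3] at h2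
      simp only [LinearMap.comp_apply, h2, LinearMap.smul_apply, LinearMap.id_apply, map_smul]
      rw [Submonoid.smul_def, ← algebraMap_smul (Localization S) (u : R), map_smul]
      erw [h4]
      rw [algebraMap_smul]
    obtain ⟨v, hv⟩ := Module.Finite.exists_smul_of_comp_eq_of_isLocalizedModule S iM _ _ h1
    refine ⟨(v * u : S), (v * u : S).2, (v : R) • h, ?_⟩
    rw [LinearMap.comp_smul]
    refine Eq.trans hv ?_
    simp [Submonoid.smul_def, mul_smul]
  · rintro ⟨r, hr, h, hh⟩
    obtain ⟨w, hw⟩ : IsUnit (algebraMap R (Localization S) r) :=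
      IsLocalization.map_units (Localization S) (⟨r, hr⟩ : S)
    have hP : Module.Projective (Localization S) (LocalizedModule S M) := by
      refine Module.Projective.of_split ((w⁻¹ : (Localization S)ˣ).1 • LocalizedModule.map S h) fS ?_
      have : fS ∘ₗ LocalizedModule.map S h = w.1 • LinearMap.id := by
        rw [hw]
        ext x
        induction x using LocalizedModule.induction_on with
        | h m s =>
          have := congr($hh m)
          simp at this
          simp [fS, LocalizedModule.map_mk, this, LocalizedModule.smul'_mk]
      rw [LinearMap.comp_smul, this, smul_smul]
      simp
    exact Module.free_of_flat_of_isLocalRing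

/-- Let `R` be a noetherian commutative ring and `M` a finitely generated
`R`-module. Then the nonfree locus of `M`, the union of the supports of `Ext^i(M,N)` over
`i > 0` and finitely generated `N`, and `V(⋂_{i>0, N} Ann Ext^i(M,N))` all coincide. -/
theorem stmt15 (R : Type) [CommRing R] [IsNoetherianRing R]
    (M : ModuleCat.{0} R) (hM : Module.Finite R M) :
    nonfreeLocus R M =
        (⋃ (i : ℕ) (_ : 0 < i) (N : ModuleCat.{0} R) (_ : Module.Finite R N),
          Module.support R (ExtMod R i M N)) ∧
    nonfreeLocus R M = PrimeSpectrum.zeroLocus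
        ((⨅ (i : ℕ) (_ : 0 < i) (N : ModuleCat.{0} R) (_ : Module.Finite R N),
          Module.annihilator R (ExtMod R i M N) : Ideal R) : Set R) := by
  obtain ⟨n, f, hf⟩ := Module.Finite.exists_fin' R M
  have h12 : nonfreeLocus R M ⊆
        (⋃ (i : ℕ) (_ : 0 < i) (N : ModuleCat.{0} R) (_ : Module.Finite R N),
          Module.support R (ExtMod R i M N)) := by
    intro p hp
    by_contra hcon
    apply hp
    rw [free_iff_factor f hf]
    obtain ⟨c, hc⟩ := exists_class f hf
    have : p ∉ Module.support R (ExtMod R 1 M (ModuleCat.of R (LinearMap.ker f))) := by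
      intro h
      apply hcon
      simp only [Set.mem_iUnion]
      exact ⟨1, one_pos, _, (inferInstance : Module.Finite R (LinearMap.ker f)), h⟩
    obtain ⟨r, hr, hrc⟩ := Module.notMem_support_iff'.1 this c
    exact ⟨r, hr, hc r hrc⟩
  have h23 : (⋃ (i : ℕ) (_ : 0 < i) (N : ModuleCat.{0} R) (_ : Module.Finite R N),
          Module.support R (ExtMod R i M N)) ⊆ PrimeSpectrum.zeroLocus
        ((⨅ (i : ℕ) (_ : 0 < i) (N : ModuleCat.{0} R) (_ : Module.Finite R N),
          Module.annihilator R (ExtMod R i M N) : Ideal R) : Set R) := by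
    intro p hp
    simp only [Set.mem_iUnion] at hp
    obtain ⟨i, hi, N, hN, h⟩ := hp
    intro r hr
    by_contra hrp
    simp only [SetLike.mem_coe, Submodule.mem_iInf] at hr
    refine Module.notMem_support_iff'.2 (fun m => ⟨r, hrp, ?_⟩) h
    exact Module.mem_annihilator.1 (hr i hi N hN) m
  have h31 : PrimeSpectrum.zeroLocus
        ((⨅ (i : ℕ) (_ : 0 < i) (N : ModuleCat.{0} R) (_ : Module.Finite R N),
          Module.annihilator R (ExtMod R i M N) : Ideal R) : Set R) ⊆ nonfreeLocus R M := by
    intro p hp hfree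
    obtain ⟨r, hr, h, hh⟩ := (free_iff_factor f hf p.asIdeal).1 hfree
    apply hr
    apply hp
    simp only [SetLike.mem_coe, Submodule.mem_iInf]
    intro i hi N hN
    obtain ⟨k, rfl⟩ : ∃ k, i = k + 1 := ⟨i - 1, by omega⟩
    rw [Module.mem_annihilator]
    have : Projective (ModuleCat.of R (Fin n → R)) :=
      (IsProjective.iff_projective _).1 inferInstance
    exact ann_of_factor r (ModuleCat.ofHom h) (ModuleCat.ofHom f)
      (ModuleCat.hom_ext hh) k N
  exact ⟨h12.antisymm (h23.trans h31), (h12.trans h23).antisymm h31⟩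

end
end

section
/- Let R be a commutative noetherian ring, M a finitely generated R-module, and I an ideal of R such that the nonfree locus NF(M) equals V(I). Then there exists an integer h > 0 such that I^h annihilates Tor_i^R(M,X) and Ext_R^i(M,X) for all integers i > 0 and all finitely generated R-modules X. -/
open CategoryTheory IsLocalRing

noncomputable section

section Helpers

open CategoryTheory CategoryTheory.Limits

/-- Scalars `r` such that multiplication by `r` on `M` factors through `b`. -/
def factorIdeal {R : Type} [CommRing R] {M : Type} [AddCommGroup M] [Module R M] {k : ℕ}
    (b : (Fin k → R) →ₗ[R] M) : Ideal R where
  carrier := {r | ∃ a : M →ₗ[R] (Fin k → R), b ∘ₗ a = r • LinearMap.id}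
  add_mem' := by
    rintro r s ⟨a, ha⟩ ⟨c, hc⟩
    exact ⟨a + c, by rw [LinearMap.comp_add, ha, hc, add_smul]⟩
  zero_mem' := ⟨0, by simp⟩
  smul_mem' := by
    rintro r s ⟨a, ha⟩
    exact ⟨r • a, by rw [LinearMap.comp_smul, ha, smul_eq_mul, mul_smul]⟩

theorem le_radical_factorIdeal {R : Type} [CommRing R] [IsNoetherianRing R]
    {M : Type} [AddCommGroup M] [Module R M] [Module.Finite R M] (I : Ideal R)
    (hNF : nonfreeLocus R M = PrimeSpectrum.zeroLocus (I : Set R)) {k : ℕ}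
    (b : (Fin k → R) →ₗ[R] M) (hb : Function.Surjective b) :
    I ≤ (factorIdeal b).radical := by
  intro r hr
  have hfp : Module.FinitePresentation R M := Module.finitePresentation_of_finite R M
  have hsub : (PrimeSpectrum.basicOpen r : Set (PrimeSpectrum R)) ⊆ Module.freeLocus R M := by
    intro p hp
    by_contra hcon
    have h1 : p ∈ nonfreeLocus R M := hcon
    rw [hNF] at h1
    exact hp (h1 hr)
  have hproj := Module.basicOpen_subset_freeLocus_iff.mp hsub
  let S := Submonoid.powers r
  have hsurj := LocalizedModule.map_surjective S b hb
  obtain ⟨s, hs⟩ := Module.projective_lifting_property (LocalizedModule.map S b) LinearMap.id hsurj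
  obtain ⟨h, t, ht⟩ := Module.FinitePresentation.exists_lift_of_isLocalizedModule S
    (LocalizedModule.mkLinearMap S (Fin k → R))
    (s.restrictScalars R ∘ₗ LocalizedModule.mkLinearMap S M)
  have key : (LocalizedModule.mkLinearMap S M).comp (b ∘ₗ h) =
      (LocalizedModule.mkLinearMap S M).comp ((t : R) • LinearMap.id) := by
    ext x
    have h1 := LinearMap.congr_fun ht x
    have h2 := congrArg (LocalizedModule.map S b) h1
    have h3 := LinearMap.congr_fun hs (LocalizedModule.mkLinearMap S M x)
    simp only [LinearMap.comp_apply, LinearMap.smul_apply, LinearMap.id_apply,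
      LocalizedModule.mkLinearMap_apply, LocalizedModule.map_mk, LinearMap.coe_restrictScalars,
      map_smul] at h2 h3 ⊢
    rw [h2]
    erw [LinearMap.map_smul_of_tower]
    rw [h3, ← LocalizedModule.mkLinearMap_apply]
    rfl
  obtain ⟨u, hu⟩ := Module.Finite.exists_smul_of_comp_eq_of_isLocalizedModule S
    (LocalizedModule.mkLinearMap S M) _ _ key
  obtain ⟨n, hn⟩ := (u * t).2
  refine ⟨n, u • h, ?_⟩
  change b ∘ₗ ((u : R) • h) = r ^ n • LinearMap.id
  have hn' : r ^ n = (u : R) * t := hn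
  rw [LinearMap.comp_smul, hn', mul_smul]
  exact hu

theorem smul_homologyMap_aux {R : Type*} [CommRing R] {D : Type*} [Category D] [Abelian D]
    [Linear R D] {K L : ChainComplex D ℕ} (r : R) (f : K ⟶ L) (n : ℕ) :
    HomologicalComplex.homologyMap (r • f) n = r • HomologicalComplex.homologyMap f n := by
  exact ShortComplex.homologyMap_smul (a := r) (φ :=
    (HomologicalComplex.shortComplexFunctor D (ComplexShape.down ℕ) n).map f)

theorem comp_smul_id_aux {R : Type*} [CommRing R] {D : Type*} [Category D] [Preadditive D]
    [Linear R D] (r : R) {A B : D} (f : A ⟶ B) : f ≫ (r • 𝟙 B) = r • f := by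
  rw [Linear.comp_smul, Category.comp_id]

theorem conj_smul_id_aux {R : Type*} [CommRing R] {D : Type*} [Category D] [Preadditive D]
    [Linear R D] (r : R) {A B : D} (e : A ≅ B) : e.hom ≫ (r • 𝟙 B) ≫ e.inv = r • 𝟙 A := by
  rw [Linear.smul_comp, Category.id_comp, Linear.comp_smul, e.hom_inv_id]

theorem leftDerived_map_smul_id {R : Type*} [CommRing R] {C D : Type*} [Category C] [Abelian C]
    [HasProjectiveResolutions C] [Category D] [Abelian D] [Linear R C] [Linear R D]
    (F : C ⥤ D) [F.Additive] [F.Linear R] (n : ℕ) (X : C) (r : R) :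
    (F.leftDerived n).map (r • 𝟙 X) = r • 𝟙 _ := by
  let P := projectiveResolution X
  rw [Functor.leftDerived_map_eq F n (r • 𝟙 X) (P := P) (Q := P) (r • 𝟙 _) (by
    ext : 1; simp only [HomologicalComplex.comp_f, HomologicalComplex.smul_f_apply,
      HomologicalComplex.id_f, ChainComplex.single₀_map_f_zero, Linear.smul_comp, Category.id_comp]
    exact (comp_smul_id_aux r _).symm)]
  rw [Functor.comp_map, Functor.map_smul]
  have := smul_homologyMap_aux r ((F.mapHomologicalComplex (ComplexShape.down ℕ)).map (𝟙 P.complex)) n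
  rw [HomologicalComplex.homologyFunctor_map, this]
  simp only [CategoryTheory.Functor.map_id, HomologicalComplex.homologyMap_id]
  exact conj_smul_id_aux r (P.isoLeftDerivedObj F n)

theorem leftDerived_natTrans_smul_id {R : Type*} [CommRing R] {C D : Type*} [Category C] [Abelian C]
    [HasProjectiveResolutions C] [Category D] [Abelian D] [Linear R D]
    (F : C ⥤ D) [F.Additive] (n : ℕ) (X : C) (r : R) (α : F ⟶ F) (hα : ∀ Y, α.app Y = r • 𝟙 _) :
    (NatTrans.leftDerived α n).app X = r • 𝟙 _ := by
  let P := projectiveResolution X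
  rw [P.leftDerived_app_eq]
  have h1 : (NatTrans.mapHomologicalComplex α (ComplexShape.down ℕ)).app P.complex = r • 𝟙 _ := by
    ext i : 1
    exact hα _
  rw [h1]
  have := smul_homologyMap_aux r (𝟙 ((F.mapHomologicalComplex (ComplexShape.down ℕ)).obj P.complex)) n
  rw [HomologicalComplex.homologyFunctor_map, this]
  simp only [CategoryTheory.Functor.map_id, HomologicalComplex.homologyMap_id]
  exact conj_smul_id_aux r (P.isoLeftDerivedObj F n)

/-- Linear structure on the opposite category. -/
@[reducible]
def linearOp (R : Type*) [CommRing R] (C : Type*) [Category C] [Preadditive C] [Linear R C] :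
    Linear R Cᵒᵖ where
  homModule X Y :=
    { smul := fun r f => (r • f.unop).op
      one_smul := fun f => Quiver.Hom.unop_inj (one_smul R f.unop)
      mul_smul := fun r s f => Quiver.Hom.unop_inj (mul_smul r s f.unop)
      smul_zero := fun r => Quiver.Hom.unop_inj (smul_zero r)
      zero_smul := fun f => Quiver.Hom.unop_inj (zero_smul R f.unop)
      smul_add := fun r f g => Quiver.Hom.unop_inj (smul_add r f.unop g.unop)
      add_smul := fun r s f => Quiver.Hom.unop_inj (add_smul r s f.unop) }
  smul_comp X Y Z r f g := Quiver.Hom.unop_inj (Linear.comp_smul _ _ _ g.unop r f.unop)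
  comp_smul X Y Z f r g := Quiver.Hom.unop_inj (Linear.smul_comp _ _ _ r g.unop f.unop)

theorem mem_annihilator_of_smul_id {R : Type} [CommRing R] (N Z : ModuleCat.{0} R) (r : R)
    (f : N ⟶ Z) (g : Z ⟶ N) (hZ : IsZero Z) (h : f ≫ g = r • 𝟙 N) :
    r ∈ Module.annihilator R N := by
  rw [Module.mem_annihilator]
  intro x
  have h0 : f ≫ g = 0 := by rw [hZ.eq_of_tgt f 0, zero_comp]
  rw [h0] at h
  have := congrArg (fun φ => φ.hom x) h
  exact this.symm

theorem tor_flat_isZero {R : Type} [CommRing R] (F X : ModuleCat.{0} R) [Module.Flat R F] (i : ℕ)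
    (hi : 0 < i) : IsZero (TorMod R i F X) := by
  let P := projectiveResolution X
  let T := (MonoidalCategory.tensoringLeft (ModuleCat.{0} R)).obj F
  have hT : T.PreservesHomology := by
    apply Functor.preservesHomology_of_map_exact
    intro S hS
    rw [ShortComplex.ShortExact.moduleCat_exact_iff_function_exact] at hS ⊢
    exact Module.Flat.lTensor_exact F hS
  refine IsZero.of_iso ?_ (P.isoLeftDerivedObj T i)
  have h1 : P.complex.ExactAt i := by
    obtain ⟨j, rfl⟩ := Nat.exists_eq_succ_of_ne_zero hi.ne'
    exact P.complex_exactAt_succ j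
  have h2 : ((T.mapHomologicalComplex _).obj P.complex).ExactAt i :=
    ShortComplex.Exact.map h1 T
  exact h2.isZero_homology

theorem ext_smul_id {R : Type} [CommRing R] (M X : ModuleCat.{0} R) (i : ℕ) (r : R) :
    ((Ext R (ModuleCat.{0} R) i).map (r • 𝟙 M).op).app X = r • 𝟙 _ := by
  let _ := linearOp R (ModuleCat.{0} R)
  let G := ((linearYoneda R (ModuleCat.{0} R)).obj X).rightOp
  have hG : G.Linear R := by
    constructor
    intro A B f r
    apply Quiver.Hom.unop_inj
    ext x
    exact Linear.smul_comp _ _ _ r f x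
  have := leftDerived_map_smul_id G i M r
  exact congrArg Quiver.Hom.unop this

theorem tor_smul_id {R : Type} [CommRing R] (M X : ModuleCat.{0} R) (i : ℕ) (r : R) :
    ((Tor (ModuleCat.{0} R) i).map (r • 𝟙 M)).app X = r • 𝟙 _ := by
  refine leftDerived_natTrans_smul_id ((MonoidalCategory.tensoringLeft (ModuleCat.{0} R)).obj M)
    i X r ((MonoidalCategory.tensoringLeft (ModuleCat.{0} R)).map (r • 𝟙 M)) ?_
  intro Y
  ext : 1
  apply TensorProduct.ext'
  intro m y
  rfl

end Helpers

/-- Let `R` be a noetherian commutative ring, `M` a finitely generated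
`R`-module and `I` an ideal with `NF(M) = V(I)`. Then there exists `h > 0` such that `I^h`
annihilates `Tor_i(M,X)` and `Ext^i(M,X)` for all `i > 0` and all finitely generated `X`. -/
theorem stmt16 (R : Type) [CommRing R] [IsNoetherianRing R]
    (M : ModuleCat.{0} R) (hM : Module.Finite R M) (I : Ideal R)
    (hNF : nonfreeLocus R M = PrimeSpectrum.zeroLocus (I : Set R)) :
    ∃ h : ℕ, 0 < h ∧ ∀ i : ℕ, 0 < i → ∀ X : ModuleCat.{0} R, Module.Finite R X →
      I ^ h ≤ Module.annihilator R (TorMod R i M X) ∧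
      I ^ h ≤ Module.annihilator R (ExtMod R i M X) := by
  obtain ⟨k, b, hb⟩ := Module.Finite.exists_fin' R M
  obtain ⟨n, hn⟩ := Ideal.exists_pow_le_of_le_radical_of_fg
    (le_radical_factorIdeal I hNF b hb) (IsNoetherian.noetherian I)
  refine ⟨n + 1, Nat.succ_pos n, fun i hi X _ => ?_⟩
  have hle : I ^ (n + 1) ≤ factorIdeal b := (Ideal.pow_le_pow_right (Nat.le_succ n)).trans hn
  let F : ModuleCat.{0} R := ModuleCat.of R (Fin k → R)
  have fac : ∀ r ∈ I ^ (n + 1), ∃ (α : M ⟶ F) (β : F ⟶ M), α ≫ β = r • 𝟙 M := by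
    intro r hr
    obtain ⟨a, ha⟩ := hle hr
    refine ⟨ModuleCat.ofHom a, ModuleCat.ofHom b, ?_⟩
    ext : 1
    exact ha
  have hflat : Module.Flat R F := inferInstanceAs (Module.Flat R (Fin k → R))
  have hpr : Projective F := by
    have : Module.Projective R F := inferInstanceAs (Module.Projective R (Fin k → R))
    exact (IsProjective.iff_projective (R := R) (P := Fin k → R)).mp this
  constructor
  · intro r hr
    obtain ⟨α, β, h⟩ := fac r hr
    refine mem_annihilator_of_smul_id _ _ r (((Tor (ModuleCat.{0} R) i).map α).app X)
      (((Tor (ModuleCat.{0} R) i).map β).app X) (tor_flat_isZero F X i hi) ?_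
    refine Eq.trans ?_ (tor_smul_id M X i r)
    rw [← h, Functor.map_comp]
    rfl
  · intro r hr
    obtain ⟨α, β, h⟩ := fac r hr
    obtain ⟨j, rfl⟩ := Nat.exists_eq_succ_of_ne_zero hi.ne'
    refine mem_annihilator_of_smul_id _ _ r (((Ext R (ModuleCat.{0} R) (j+1)).map β.op).app X)
      (((Ext R (ModuleCat.{0} R) (j+1)).map α.op).app X)
      (isZero_Ext_succ_of_projective F X j) ?_
    refine Eq.trans ?_ (ext_smul_id M X (j+1) r)
    rw [← h, op_comp, Functor.map_comp]
    rfl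

end
end

section
/- Let R be a Cohen-Macaulay commutative noetherian local ring with maximal ideal m. If the ideal ⋂ Ann_R Tor_i^R(M,N), where the intersection ranges over all integers i > 0 and all modules M, N in CM_0(R), is m-primary (i.e., its radical equals m), then R is an isolated singularity, that is, R_p is a regular local ring for every nonmaximal prime ideal p of R. -/
open CategoryTheory IsLocalRing

noncomputable section

section Part1
set_option linter.unusedSectionVars false
open TensorProduct Function

universe u v

/-- A diagram chase giving balance of the first Tor. -/
lemma kill_chase {R : Type} [CommRing R] (a : R) {JK JF JY GK GF GY XK XF : Type}
    [AddCommGroup JK] [AddCommGroup JF] [AddCommGroup JY] [AddCommGroup GK] [AddCommGroup GF]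
    [AddCommGroup GY] [AddCommGroup XK] [AddCommGroup XF]
    [Module R JK] [Module R JF] [Module R JY] [Module R GK] [Module R GF]
    [Module R GY] [Module R XK] [Module R XF]
    (α : JK →ₗ[R] JF) (β : JF →ₗ[R] JY) (α' : GK →ₗ[R] GF) (β' : GF →ₗ[R] GY)
    (α'' : XK →ₗ[R] XF) (jK : JK →ₗ[R] GK) (jF : JF →ₗ[R] GF) (jY : JY →ₗ[R] GY)
    (qK : GK →ₗ[R] XK) (qF : GF →ₗ[R] XF)
    (h1 : ∀ x, β (α x) = 0) (h2 : Surjective β) (h3 : ∀ x, β' x = 0 → ∃ y, α' y = x)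
    (h4 : Injective jF) (h5 : ∀ x, qK x = 0 → ∃ y, jK y = x) (h6 : ∀ x, qF (jF x) = 0)
    (c1 : ∀ x, jF (α x) = α' (jK x)) (c2 : ∀ x, jY (β x) = β' (jF x))
    (c3 : ∀ x, qF (α' x) = α'' (qK x))
    (H : ∀ t, α'' t = 0 → a • t = 0) : ∀ t, jY t = 0 → a • t = 0 := by
  intro t ht
  obtain ⟨s, rfl⟩ := h2 t
  rw [c2] at ht
  obtain ⟨u, hu⟩ := h3 _ ht
  have := H (qK u) (by rw [← c3, hu, h6])
  rw [← map_smul] at this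
  obtain ⟨w, hw⟩ := h5 _ this
  have : a • s = α w := by
    apply h4
    rw [map_smul, c1, hw, map_smul, hu]
  rw [← map_smul, this, h1]

variable {R : Type} [CommRing R] {X Y G F : Type}
  [AddCommGroup X] [AddCommGroup Y] [AddCommGroup G] [AddCommGroup F]
  [Module R X] [Module R Y] [Module R G] [Module R F]

/-- `a` kills `ker (X ⊗ ker f → X ⊗ F)`. -/
def KR (a : R) (X : Type) [AddCommGroup X] [Module R X] (f : F →ₗ[R] Y) : Prop :=
  ∀ t : X ⊗[R] (LinearMap.ker f), (LinearMap.ker f).subtype.lTensor X t = 0 → a • t = 0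

/-- `a` kills `ker (ker g ⊗ Y → G ⊗ Y)`. -/
def KL (a : R) (g : G →ₗ[R] X) (Y : Type) [AddCommGroup Y] [Module R Y] : Prop :=
  ∀ t : (LinearMap.ker g) ⊗[R] Y, (LinearMap.ker g).subtype.rTensor Y t = 0 → a • t = 0

lemma KR_iff_KL [Module.Flat R G] [Module.Flat R F] (a : R) (g : G →ₗ[R] X) (f : F →ₗ[R] Y)
    (hg : Surjective g) (hf : Surjective f) : KR a X f ↔ KL a g Y := by
  have eg : Exact (LinearMap.ker g).subtype g := LinearMap.exact_subtype_ker_map g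
  have ef : Exact (LinearMap.ker f).subtype f := LinearMap.exact_subtype_ker_map f
  have comm : ∀ {A A' B B' : Type} [AddCommGroup A] [AddCommGroup A'] [AddCommGroup B]
      [AddCommGroup B'] [Module R A] [Module R A'] [Module R B] [Module R B']
      (p : A →ₗ[R] A') (q : B →ₗ[R] B') (t : A ⊗[R] B),
      p.rTensor B' (q.lTensor A t) = q.lTensor A' (p.rTensor B t) := by
    intros
    rw [← LinearMap.comp_apply, ← LinearMap.comp_apply, LinearMap.rTensor_comp_lTensor,
      LinearMap.lTensor_comp_rTensor]
  constructor
  · intro H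
    refine kill_chase a ((LinearMap.ker f).subtype.lTensor (LinearMap.ker g))
      (f.lTensor (LinearMap.ker g)) ((LinearMap.ker f).subtype.lTensor G) (f.lTensor G)
      ((LinearMap.ker f).subtype.lTensor X)
      ((LinearMap.ker g).subtype.rTensor _) ((LinearMap.ker g).subtype.rTensor _)
      ((LinearMap.ker g).subtype.rTensor _) (g.rTensor _) (g.rTensor _)
      ?_ (LinearMap.lTensor_surjective _ hf) ?_ ?_ ?_ ?_ ?_ ?_ ?_ H
    · exact fun x => (lTensor_exact (LinearMap.ker g) ef hf).apply_apply_eq_zero x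
    · exact fun x hx => ((lTensor_exact G ef hf) x).1 hx
    · exact Module.Flat.rTensor_preserves_injective_linearMap _ (Submodule.subtype_injective _)
    · exact fun x hx => ((rTensor_exact _ eg hg) x).1 hx
    · exact fun x => (rTensor_exact _ eg hg).apply_apply_eq_zero x
    · intro x; rw [comm]
    · intro x; rw [comm]
    · intro x; rw [comm]
  · intro H
    refine kill_chase a ((LinearMap.ker g).subtype.rTensor (LinearMap.ker f))
      (g.rTensor (LinearMap.ker f)) ((LinearMap.ker g).subtype.rTensor F) (g.rTensor F)
      ((LinearMap.ker g).subtype.rTensor Y)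
      ((LinearMap.ker f).subtype.lTensor _) ((LinearMap.ker f).subtype.lTensor _)
      ((LinearMap.ker f).subtype.lTensor _) (f.lTensor _) (f.lTensor _)
      ?_ (LinearMap.rTensor_surjective _ hg) ?_ ?_ ?_ ?_ ?_ ?_ ?_ H
    · exact fun x => (rTensor_exact (LinearMap.ker f) eg hg).apply_apply_eq_zero x
    · exact fun x hx => ((rTensor_exact F eg hg) x).1 hx
    · exact Module.Flat.lTensor_preserves_injective_linearMap _ (Submodule.subtype_injective _)
    · exact fun x hx => ((lTensor_exact _ ef hf) x).1 hx
    · exact fun x => (lTensor_exact _ ef hf).apply_apply_eq_zero x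
    · intro x; rw [comm]
    · intro x; rw [comm]
    · intro x; rw [comm]

lemma KL_ker_iff [Module.Flat R G] [Module.Flat R F] (a : R) (g : G →ₗ[R] X) (f : F →ₗ[R] Y) :
    KL a g (LinearMap.ker f) ↔ KR a (LinearMap.ker g) f := by
  have comm : ∀ t, (LinearMap.ker g).subtype.rTensor F ((LinearMap.ker f).subtype.lTensor _ t)
     = (LinearMap.ker f).subtype.lTensor G ((LinearMap.ker g).subtype.rTensor _ t) := by
    intros
    rw [← LinearMap.comp_apply, ← LinearMap.comp_apply, LinearMap.rTensor_comp_lTensor,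
      LinearMap.lTensor_comp_rTensor]
  have i1 : Injective ((LinearMap.ker g).subtype.rTensor F) :=
    Module.Flat.rTensor_preserves_injective_linearMap _ (Submodule.subtype_injective _)
  have i2 : Injective ((LinearMap.ker f).subtype.lTensor G) :=
    Module.Flat.lTensor_preserves_injective_linearMap _ (Submodule.subtype_injective _)
  refine forall_congr' fun t => imp_congr_left ?_
  rw [← map_eq_zero_iff _ i1, ← map_eq_zero_iff _ i2, comm]

variable [IsLocalRing R] [IsNoetherianRing R]

lemma lTensor_mkQ_ker (J Y : Type) [AddCommGroup J] [AddCommGroup Y] [Module R J] [Module R Y]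
    (I : Ideal R) (t : J ⊗[R] Y)
    (ht : (Submodule.mkQ (I • (⊤ : Submodule R Y))).lTensor J t = 0) :
    t ∈ I • (⊤ : Submodule R (J ⊗[R] Y)) := by
  obtain ⟨s, rfl⟩ := ((lTensor_exact J (LinearMap.exact_subtype_mkQ (I • (⊤ : Submodule R Y)))
    (Submodule.mkQ_surjective _)) t).1 ht
  induction s using TensorProduct.induction_on with
  | zero => simp
  | add x y hx hy =>
    rw [map_add]
    exact add_mem (hx ((lTensor_exact J (LinearMap.exact_subtype_mkQ _)
      (Submodule.mkQ_surjective _)).apply_apply_eq_zero _)) (hy ((lTensor_exact J (LinearMap.exact_subtype_mkQ _)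
      (Submodule.mkQ_surjective _)).apply_apply_eq_zero _))
  | tmul j y =>
    clear ht
    obtain ⟨y, hy⟩ := y
    simp only [LinearMap.lTensor_tmul, Submodule.subtype_apply]
    induction hy using Submodule.smul_induction_on' with
    | smul r hr n hn =>
      rw [TensorProduct.tmul_smul]
      exact Submodule.smul_mem_smul hr trivial
    | add x hx y hy h1 h2 =>
      rw [TensorProduct.tmul_add]; exact add_mem h1 h2

lemma rTensor_mkQ_ker (J Y : Type) [AddCommGroup J] [AddCommGroup Y] [Module R J] [Module R Y]
    (I : Ideal R) (t : Y ⊗[R] J)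
    (ht : (Submodule.mkQ (I • (⊤ : Submodule R Y))).rTensor J t = 0) :
    t ∈ I • (⊤ : Submodule R (Y ⊗[R] J)) := by
  have h : TensorProduct.comm R Y J t ∈ I • (⊤ : Submodule R (J ⊗[R] Y)) := by
    apply lTensor_mkQ_ker
    rw [LinearMap.lTensor_comm, ht, map_zero]
  have := Submodule.mem_map_of_mem (f := (TensorProduct.comm R J Y).toLinearMap) h
  rw [Submodule.map_smul''] at this
  simpa using this

lemma eq_zero_of_forall_pow {T : Type} [AddCommGroup T] [Module R T] [Module.Finite R T] (t : T)
    (h : ∀ n : ℕ, t ∈ (maximalIdeal R) ^ n • (⊤ : Submodule R T)) : t = 0 := by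
  have := Ideal.iInf_pow_smul_eq_bot_of_isLocalRing (M := T) (maximalIdeal R)
    (Ideal.IsPrime.ne_top inferInstance)
  rw [← Submodule.mem_bot R, ← this]
  simpa using h

lemma KL_krull [Module.Finite R G] [Module.Finite R Y] (a : R) (g : G →ₗ[R] X)
    (h : ∀ n : ℕ, KL a g (Y ⧸ ((maximalIdeal R) ^ n • (⊤ : Submodule R Y)))) : KL a g Y := by
  intro t ht
  apply eq_zero_of_forall_pow (R := R)
  intro n
  apply lTensor_mkQ_ker
  rw [map_smul]
  apply h n
  rw [← LinearMap.comp_apply, LinearMap.rTensor_comp_lTensor, ← LinearMap.lTensor_comp_rTensor,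
    LinearMap.comp_apply, ht, map_zero]

lemma KR_krull [Module.Finite R F] [Module.Finite R X] (a : R) (f : F →ₗ[R] Y)
    (h : ∀ n : ℕ, KR a (X ⧸ ((maximalIdeal R) ^ n • (⊤ : Submodule R X))) f) : KR a X f := by
  intro t ht
  apply eq_zero_of_forall_pow (R := R)
  intro n
  apply rTensor_mkQ_ker
  rw [map_smul]
  apply h n
  rw [← LinearMap.comp_apply, LinearMap.lTensor_comp_rTensor, ← LinearMap.rTensor_comp_lTensor,
    LinearMap.comp_apply, ht, map_zero]

end Part1
section Part2
open TensorProduct Function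

lemma sc_kill {R : Type} [CommRing R] (S : ShortComplex (ModuleCat.{0} R)) (a : R)
    (h : a ∈ Module.annihilator R S.homology) (x : S.X₂) (hx : S.g x = 0) :
    ∃ y, S.f y = a • x := by
  have h' : a ∈ Module.annihilator R S.moduleCatLeftHomologyData.H := by
    rwa [← (S.moduleCatHomologyIso.toLinearEquiv).annihilator_eq]
  rw [Module.mem_annihilator] at h'
  have h2 : (Submodule.mkQ (LinearMap.range S.moduleCatToCycles)) (a • ⟨x, hx⟩) = 0 := 
    h' (Submodule.mkQ (LinearMap.range S.moduleCatToCycles) ⟨x, hx⟩)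
  rw [Submodule.mkQ_apply, Submodule.Quotient.mk_eq_zero] at h2
  obtain ⟨y, hy⟩ := h2
  exact ⟨y, congrArg Subtype.val hy⟩

lemma KR_of_res {R : Type} [CommRing R] (a : R) (M N P0 P1 P2 : Type) 
    [AddCommGroup M] [AddCommGroup N] [AddCommGroup P0] [AddCommGroup P1] [AddCommGroup P2]
    [Module R M] [Module R N] [Module R P0] [Module R P1] [Module R P2]
    (d2 : P2 →ₗ[R] P1) (d1 : P1 →ₗ[R] P0) (f : P0 →ₗ[R] N)
    (h1 : ∀ x, f (d1 x) = 0) (h2 : ∀ x, d1 (d2 x) = 0)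
    (ex0 : ∀ z, f z = 0 → ∃ w, d1 w = z)
    (hk : ∀ x : M ⊗[R] P1, d1.lTensor M x = 0 → ∃ y : M ⊗[R] P2, d2.lTensor M y = a • x) :
    KR a M f := by
  intro t ht
  let d : P1 →ₗ[R] LinearMap.ker f := d1.codRestrict _ h1
  have hd : Surjective d := by
    rintro ⟨z, hz⟩
    obtain ⟨w, hw⟩ := ex0 z hz
    exact ⟨w, Subtype.ext hw⟩
  obtain ⟨x, rfl⟩ := LinearMap.lTensor_surjective M hd t
  obtain ⟨y, hy'⟩ := hk x (by
    rw [← LinearMap.comp_apply, ← LinearMap.lTensor_comp] at ht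
    exact ht)
  rw [← map_smul]
  rw [← hy', ← LinearMap.comp_apply, ← LinearMap.lTensor_comp]
  have : d ∘ₗ d2 = 0 := by
    ext c
    exact h2 c
  rw [this]; simp

lemma tor_KR {R : Type} [CommRing R] (a : R) (M N : ModuleCat.{0} R)
    (h : a ∈ Module.annihilator R (TorMod R 1 M N)) :
    ∃ (F : Type) (_ : AddCommGroup F) (_ : Module R F) (_ : Module.Flat R F) (f : F →ₗ[R] N),
      Surjective f ∧ KR a M f := by
  let P := projectiveResolution N
  let Fu := (MonoidalCategory.tensoringLeft (ModuleCat.{0} R)).obj M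
  let K := (Fu.mapHomologicalComplex _).obj P.complex
  let e : TorMod R 1 M N ≅ (K.sc' 2 1 0).homology := P.isoLeftDerivedObj Fu 1 ≪≫
    ShortComplex.homologyMapIso (K.isoSc' 2 1 0 (by simp) (by simp))
  rw [e.toLinearEquiv.annihilator_eq] at h
  have hk := sc_kill _ a h
  have hp : Module.Projective R (P.complex.X 0) :=
    (IsProjective.iff_projective _).2 (P.projective 0)
  refine ⟨P.complex.X 0, inferInstance, inferInstance, inferInstance,
    (P.π.f 0).hom, ?_, ?_⟩
  · exact (ModuleCat.epi_iff_surjective (P.π.f 0)).1 inferInstance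
  · refine KR_of_res a M N (P.complex.X 0) (P.complex.X 1) (P.complex.X 2)
      (P.complex.d 2 1).hom (P.complex.d 1 0).hom (P.π.f 0).hom ?_ ?_ ?_ hk
    · intro c
      exact congrArg (fun q => q.hom c) P.complex_d_comp_π_f_zero
    · intro c
      exact congrArg (fun q => q.hom c) (P.complex.d_comp_d 2 1 0)
    · intro z hz
      exact (ShortComplex.moduleCat_exact_iff _).1 P.exact₀ z hz

end Part2

section Part3
open TensorProduct Function

lemma quot_tmul_surj {S M : Type} [CommRing S] [AddCommGroup M] [Module S M] (I : Ideal S)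
    (t : (S ⧸ I) ⊗[S] M) : ∃ v : M, t = (1 : S ⧸ I) ⊗ₜ[S] v := by
  induction t with
  | zero => exact ⟨0, by simp⟩
  | tmul a v =>
    obtain ⟨a, rfl⟩ := Ideal.Quotient.mk_surjective a
    refine ⟨a • v, ?_⟩
    rw [← TensorProduct.smul_tmul, Algebra.smul_def, mul_one]; rfl
  | add a b ha hb =>
    obtain ⟨v, rfl⟩ := ha
    obtain ⟨w, rfl⟩ := hb
    exact ⟨v + w, (TensorProduct.tmul_add _ _ _).symm⟩

lemma quot_tmul_zero_iff {S M : Type} [CommRing S] [AddCommGroup M] [Module S M] (I : Ideal S)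
    (v : M) : (1 : S ⧸ I) ⊗ₜ[S] v = 0 ↔ v ∈ I • (⊤ : Submodule S M) := by
  have := TensorProduct.quotTensorEquivQuotSMul_mk_tmul I 1 v
  rw [one_smul, map_one] at this
  rw [← (TensorProduct.quotTensorEquivQuotSMul M I).map_eq_zero_iff, this,
    Submodule.Quotient.mk_eq_zero]

lemma quot_lTensor_inj {S K F : Type} [CommRing S] [AddCommGroup K] [Module S K] 
    [AddCommGroup F] [Module S F] (I : Ideal S) (j : K →ₗ[S] F)
    (h : ∀ v, j v ∈ I • (⊤ : Submodule S F) → v ∈ I • (⊤ : Submodule S K)) :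
    Injective (j.lTensor (S ⧸ I)) := by
  rw [injective_iff_map_eq_zero]
  intro t ht
  obtain ⟨v, rfl⟩ := quot_tmul_surj I t
  rw [LinearMap.lTensor_tmul, quot_tmul_zero_iff] at ht
  exact (quot_tmul_zero_iff I v).2 (h v ht)

lemma pd_ker {S F M : Type} [CommRing S] [AddCommGroup M] [Module S M] 
    [AddCommGroup F] [Module S F] [Module.Projective S F] (f : F →ₗ[S] M) (hf : Surjective f)
    (n : ℕ) (h : HasProjectiveDimensionLE (ModuleCat.of S M) (n + 1)) :
    HasProjectiveDimensionLE (ModuleCat.of S (LinearMap.ker f)) n := by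
  have hp : Projective (ModuleCat.of S F) := (IsProjective.iff_projective F).1 inferInstance
  exact (LinearMap.shortExact_shortComplexKer hf).hasProjectiveDimensionLT_X₁ (n + 1)
    (hasProjectiveDimensionLT_of_ge (ModuleCat.of S F) 1 (n + 1) (by omega)) h

lemma pd_of_ker {S F M : Type} [CommRing S] [AddCommGroup M] [Module S M] 
    [AddCommGroup F] [Module S F] [Module.Projective S F] (f : F →ₗ[S] M) (hf : Surjective f)
    (n : ℕ) (h : HasProjectiveDimensionLE (ModuleCat.of S (LinearMap.ker f)) n) :
    HasProjectiveDimensionLE (ModuleCat.of S M) (n + 1) := by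
  have hp : Projective (ModuleCat.of S F) := (IsProjective.iff_projective F).1 inferInstance
  exact (LinearMap.shortExact_shortComplexKer hf).hasProjectiveDimensionLT_X₃ (n + 1)
    h (hasProjectiveDimensionLT_of_ge (ModuleCat.of S F) 1 (n + 1 + 1) (by omega))

lemma free_of_pd {S : Type} [CommRing S] [IsLocalRing S] [IsNoetherianRing S] (s : S)
    (hs : s ≠ 0) (hms : ∀ y ∈ maximalIdeal S, y * s = 0) (n : ℕ) : ∀ (M : Type) [AddCommGroup M]
    [Module S M] [Module.Finite S M], HasProjectiveDimensionLE (ModuleCat.of S M) n →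
    Module.Free S M := by
  induction n with
  | zero =>
    intro M _ _ _ h
    have : Projective (ModuleCat.of S M) := (projective_iff_hasProjectiveDimensionLE_zero _).2 h
    have : Module.Projective S M := (IsProjective.iff_projective M).2 this
    exact Module.free_of_flat_of_isLocalRing
  | succ n ih =>
    intro M _ _ _ h
    obtain ⟨r, f, hf⟩ := Module.Finite.exists_fin' S M
    have hK := ih (LinearMap.ker f) (pd_ker f hf n h)
    refine Module.free_of_lTensor_residueField_injective (LinearMap.ker f).subtype f hf
      (LinearMap.exact_subtype_ker_map f) ?_
    refine quot_lTensor_inj (maximalIdeal S) _ ?_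
    intro v hv
    have hsv : s • v = 0 := by
      apply Subtype.ext
      have : ∀ w ∈ maximalIdeal S • (⊤ : Submodule S (Fin r → S)), s • w = 0 := by
        intro w hw
        refine Submodule.smul_induction_on hw ?_ ?_
        · intro y hy z _
          rw [smul_smul, mul_comm, hms y hy, zero_smul]
        · intro a b ha hb
          rw [smul_add, ha, hb, add_zero]
      exact this _ hv
    let b := Module.Free.chooseBasis S (LinearMap.ker f)
    rw [← b.sum_repr v]
    refine Submodule.sum_mem _ fun i _ => Submodule.smul_mem_smul ?_ trivial
    by_contra hc
    rw [mem_maximalIdeal, mem_nonunits_iff, not_not] at hc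
    have : s * b.repr v i = 0 := by
      have := congrArg (fun w => b.repr w i) hsv
      simpa using this
    exact hs ((hc.mul_left_eq_zero).1 this)

lemma pd_quot {S : Type} [CommRing S] (x : S) (hx : x ∈ nonZeroDivisors S) (n : ℕ) :
    ∀ (M : Type) [AddCommGroup M] [Module S M], (∀ v : M, x • v = 0 → v = 0) →
    HasProjectiveDimensionLE (ModuleCat.of S M) n →
    HasProjectiveDimensionLE (ModuleCat.of (S ⧸ Ideal.span {x})
      ((S ⧸ Ideal.span {x}) ⊗[S] M)) n := by
  induction n with
  | zero =>
    intro M _ _ _ h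
    have : Projective (ModuleCat.of S M) := (projective_iff_hasProjectiveDimensionLE_zero _).2 h
    have : Module.Projective S M := (IsProjective.iff_projective M).2 this
    exact (projective_iff_hasProjectiveDimensionLE_zero _).1
      ((IsProjective.iff_projective _).1 inferInstance)
  | succ n ih =>
    intro M _ _ hreg h
    obtain ⟨F, _, _, _, f, hf, hF⟩ : ∃ (F : Type) (_ : AddCommGroup F) (_ : Module S F)
        (_ : Module.Projective S F) (f : F →ₗ[S] M), Surjective f ∧
        ∀ v : F, x • v = 0 → v = 0 := by
      refine ⟨M →₀ S, inferInstance, inferInstance, inferInstance, Finsupp.linearCombination S id,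
        Finsupp.linearCombination_id_surjective S M, ?_⟩
      intro v hv
      ext i
      have := DFunLike.congr_fun hv i
      simp only [Finsupp.smul_apply, smul_eq_mul, Finsupp.zero_apply] at this
      exact (mul_left_mem_nonZeroDivisors_eq_zero_iff hx).1 this
    have h1 := ih (LinearMap.ker f) (fun v hv => Subtype.ext (hF v (congrArg Subtype.val hv)))
      (pd_ker f hf n h)
    have hj : Injective ((LinearMap.ker f).subtype.baseChange (S ⧸ Ideal.span {x})) := by
      refine quot_lTensor_inj (Ideal.span {x}) (LinearMap.ker f).subtype ?_
      rintro ⟨v, hv0⟩ hv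
      rw [Submodule.ideal_span_singleton_smul, Submodule.mem_smul_pointwise_iff_exists] at hv ⊢
      obtain ⟨w, -, hw⟩ := hv
      have hw' : x • w = v := hw
      have hfw : f w = 0 := hreg _ (by rw [← map_smul, hw']; exact hv0)
      exact ⟨⟨w, hfw⟩, trivial, Subtype.ext hw⟩
    have hg : Surjective (f.baseChange (S ⧸ Ideal.span {x})) := LinearMap.lTensor_surjective _ hf
    have hjg : Exact ((LinearMap.ker f).subtype.baseChange (S ⧸ Ideal.span {x}))
        (f.baseChange (S ⧸ Ideal.span {x})) :=
      lTensor_exact (S ⧸ Ideal.span {x}) (LinearMap.exact_subtype_ker_map f) hf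
    let e := (LinearEquiv.ofInjective _ hj).trans
      (LinearEquiv.ofEq _ _ hjg.linearMap_ker_eq.symm)
    exact pd_of_ker _ hg n (hasProjectiveDimensionLT_of_iso (LinearEquiv.toModuleIso e) _)
end Part3

section Part3b
open TensorProduct Function

lemma exists_reg {S : Type} [CommRing S] [IsLocalRing S] [IsNoetherianRing S]
    (hA : ¬ ∃ s : S, s ≠ 0 ∧ ∀ y ∈ maximalIdeal S, y * s = 0) :
    ∃ x ∈ maximalIdeal S, x ∉ maximalIdeal S ^ 2 ∧ x ∈ nonZeroDivisors S := by
  classical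
  by_contra! hcon
  have hfin := associatedPrimes.finite S S
  have hsub : (maximalIdeal S : Set S) ⊆
      ⋃ i ∈ (↑(insert (maximalIdeal S ^ 2) hfin.toFinset) : Set (Ideal S)), (i : Set S) := by
    intro x hx
    by_cases h2 : x ∈ maximalIdeal S ^ 2
    · exact Set.mem_biUnion (by simp) h2
    · have h3 : x ∈ (↑(nonZeroDivisors S) : Set S)ᶜ := hcon x hx h2
      rw [← biUnion_associatedPrimes_eq_compl_nonZeroDivisors, Set.mem_iUnion₂] at h3
      obtain ⟨P, hP, hxP⟩ := h3
      exact Set.mem_biUnion (by simp [hP]) hxP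
  obtain ⟨P, hP, hmP⟩ := (Ideal.subset_union_prime (f := id) (maximalIdeal S ^ 2)
    (maximalIdeal S ^ 2) (by
      intro i hi h1 _
      have : i ∈ associatedPrimes S S := by simpa [h1] using hi
      exact this.1)).1 hsub
  rw [Finset.mem_insert] at hP
  rcases hP with rfl | hP
  · apply hA
    have : maximalIdeal S = ⊥ := by
      refine Submodule.eq_bot_of_le_smul_of_le_jacobson_bot (maximalIdeal S) (maximalIdeal S)
        (IsNoetherian.noetherian _) ?_ (maximalIdeal_le_jacobson _)
      simpa [pow_two] using hmP
    refine ⟨1, one_ne_zero, ?_⟩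
    intro y hy
    rw [this] at hy
    simpa using hy
  · have hP' : P ∈ associatedPrimes S S := by simpa using hP
    have hPm : P = maximalIdeal S := le_antisymm (le_maximalIdeal hP'.1.ne_top) hmP
    subst hPm
    obtain ⟨_, s, hs⟩ := isAssociatedPrime_iff.1 hP'
    apply hA
    refine ⟨s, ?_, ?_⟩
    · rintro rfl
      have : (1 : S) ∈ maximalIdeal S := by
        rw [hs, Submodule.mem_colon_singleton]; simp
      exact (Ideal.ne_top_iff_one _).1 (IsLocalRing.maximalIdeal.isMaximal S).ne_top this
    · intro y hy
      rw [hs, Submodule.mem_colon_singleton] at hy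
      simpa using hy

lemma retr {S : Type} [CommRing S] [IsLocalRing S] (x : S) (hx : x ∈ maximalIdeal S)
    (hx2 : x ∉ maximalIdeal S ^ 2) [IsLocalRing (S ⧸ Ideal.span {x})] :
    Nonempty (Retract
      (ModuleCat.of (S ⧸ Ideal.span {x}) ((S ⧸ Ideal.span {x}) ⧸ 
        maximalIdeal (S ⧸ Ideal.span {x})))
      (ModuleCat.of (S ⧸ Ideal.span {x}) ((S ⧸ Ideal.span {x}) ⊗[S] maximalIdeal S))) := by
  let S' := S ⧸ Ideal.span {x}
  have hmap : (maximalIdeal S).map (algebraMap S S') = maximalIdeal S' := 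
    map_maximalIdeal_of_surjective _ Ideal.Quotient.mk_surjective
  -- functional
  have hne : (maximalIdeal S).toCotangent ⟨x, hx⟩ ≠ 0 := by
    rwa [Ne, Ideal.toCotangent_eq_zero]
  obtain ⟨ψ, hψ⟩ : ∃ ψ : CotangentSpace S →ₗ[ResidueField S] ResidueField S,
      ψ ((maximalIdeal S).toCotangent ⟨x, hx⟩) = 1 := by
    have := mt (Module.forall_dual_apply_eq_zero_iff (ResidueField S)
      (V := CotangentSpace S) ((maximalIdeal S).toCotangent ⟨x, hx⟩)).1 hne
    push Not at this
    obtain ⟨φ, hφ⟩ := this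
    refine ⟨(φ ((maximalIdeal S).toCotangent ⟨x, hx⟩))⁻¹ • φ, ?_⟩
    rw [LinearMap.smul_apply, smul_eq_mul, inv_mul_cancel₀ hφ]
  let θ : (S ⧸ maximalIdeal S) →ₗ[S] (S' ⧸ maximalIdeal S') :=
    Submodule.liftQ (maximalIdeal S) (LinearMap.toSpanSingleton S (S' ⧸ maximalIdeal S') 1) (by
      intro y hy
      rw [LinearMap.mem_ker, LinearMap.toSpanSingleton_apply]
      have h1 : algebraMap S S' y ∈ maximalIdeal S' := hmap ▸ Ideal.mem_map_of_mem _ hy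
      have h2 : Ideal.Quotient.mk (maximalIdeal S') (algebraMap S S' y) = 0 :=
        Ideal.Quotient.eq_zero_iff_mem.2 h1
      rw [Algebra.smul_def, mul_one]
      exact h2)
  let φ : maximalIdeal S →ₗ[S] (S' ⧸ maximalIdeal S') :=
    θ ∘ₗ (ψ.restrictScalars S) ∘ₗ (maximalIdeal S).toCotangent
  have hφ : φ ⟨x, hx⟩ = 1 := by
    change θ (ψ ((maximalIdeal S).toCotangent ⟨x, hx⟩)) = 1
    rw [hψ]
    change θ (Submodule.Quotient.mk 1) = 1
    exact (Submodule.liftQ_apply _ _ _).trans (by simp)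
  let i : (S' ⧸ maximalIdeal S') →ₗ[S'] (S' ⊗[S] maximalIdeal S) :=
    Submodule.liftQ (maximalIdeal S') 
      (LinearMap.toSpanSingleton S' _ ((1 : S') ⊗ₜ[S] (⟨x, hx⟩ : maximalIdeal S))) (by
      rw [← hmap, Ideal.map_le_iff_le_comap]
      intro y hy
      rw [Ideal.mem_comap, LinearMap.mem_ker, LinearMap.toSpanSingleton_apply,
        TensorProduct.smul_tmul', smul_eq_mul, mul_one]
      have e1 : algebraMap S S' y = y • (1 : S') := by rw [Algebra.smul_def, mul_one]
      rw [e1, TensorProduct.smul_tmul]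
      have e2 : y • (⟨x, hx⟩ : maximalIdeal S) = x • ⟨y, hy⟩ := Subtype.ext (mul_comm _ _)
      rw [e2, ← TensorProduct.smul_tmul]
      have e3 : x • (1 : S') = 0 := by
        rw [Algebra.smul_def, mul_one]
        exact Ideal.Quotient.eq_zero_iff_mem.2 (Ideal.mem_span_singleton_self x)
      rw [e3, TensorProduct.zero_tmul])
  refine ⟨⟨ModuleCat.ofHom i, ModuleCat.ofHom (LinearMap.liftBaseChange S' φ), ?_⟩⟩
  rw [← ModuleCat.ofHom_comp, ← ModuleCat.ofHom_id]
  congr 1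
  apply Submodule.linearMap_qext
  apply LinearMap.ext_ring
  change LinearMap.liftBaseChange S' φ (i (Submodule.Quotient.mk 1)) = Submodule.Quotient.mk 1
  have : i (Submodule.Quotient.mk 1) = (1 : S') ⊗ₜ[S] (⟨x, hx⟩ : maximalIdeal S) := by
    exact (Submodule.liftQ_apply _ _ _).trans (by simp)
  rw [this, LinearMap.liftBaseChange_tmul, hφ, one_smul]
  rfl

lemma wb_cancel (a : WithBot ℕ∞) (d : ℕ) (h : a + 1 = (d : WithBot ℕ∞) + 1) : a = d := by
  induction a with
  | bot => 
    rw [WithBot.bot_add] at h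
    exact absurd h.symm (by exact_mod_cast WithBot.coe_ne_bot)
  | coe a =>
    have h' : a + 1 = (d : ℕ∞) + 1 := by exact_mod_cast h
    have : a = d := by
      induction a with
      | top => exact absurd h' (by exact_mod_cast (ENat.natCast_ne_top (d + 1)).symm)
      | coe a => norm_cast at h' ⊢; omega
    rw [this]; rfl

lemma serreA (n : ℕ) (S : Type) [CommRing S] [IsLocalRing S] [IsNoetherianRing S]
    (hA : ∃ s : S, s ≠ 0 ∧ ∀ y ∈ maximalIdeal S, y * s = 0)
    (h : HasProjectiveDimensionLE (ModuleCat.of S (S ⧸ maximalIdeal S)) n) :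
    IsRegularLocalRing S := by
  obtain ⟨s, hs, hms⟩ := hA
  have := free_of_pd s hs hms n _ h
  have hm : maximalIdeal S = ⊥ := by
    rw [eq_bot_iff]
    intro y hy
    refine FaithfulSMul.eq_of_smul_eq_smul (M := S) (α := S ⧸ maximalIdeal S) ?_
    intro a
    obtain ⟨a, rfl⟩ := Ideal.Quotient.mk_surjective a
    rw [zero_smul]
    exact Ideal.Quotient.eq_zero_iff_mem.2 (Ideal.mul_mem_right _ _ hy)
  apply IsRegularLocalRing.of_spanFinrank_maximalIdeal_le
  rw [hm]
  simpa using ringKrullDim_nonneg_of_nontrivial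

lemma reg_lift {S : Type} [CommRing S] [IsLocalRing S] [IsNoetherianRing S] (x : S)
    (hx : x ∈ maximalIdeal S) (hx0 : x ∈ nonZeroDivisors S)
    (h : IsRegularLocalRing (S ⧸ Ideal.span {x})) : IsRegularLocalRing S := by
  apply IsRegularLocalRing.of_spanFinrank_maximalIdeal_le
  rw [← ringKrullDim_quotient_span_singleton_succ_eq_ringKrullDim_of_mem_nonZeroDivisors hx0 hx,
    ← h.spanFinrank_maximalIdeal]
  have hmap : (maximalIdeal S).map (Ideal.Quotient.mk (Ideal.span {x})) =
      maximalIdeal (S ⧸ Ideal.span {x}) := 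
    map_maximalIdeal_of_surjective _ Ideal.Quotient.mk_surjective
  have hfg : Submodule.FG (maximalIdeal (S ⧸ Ideal.span {x})) := IsNoetherian.noetherian _
  have hfin := Submodule.FG.finite_generators hfg
  let l : (S ⧸ Ideal.span {x}) → S := surjInv Ideal.Quotient.mk_surjective
  have hl : ∀ y, Ideal.Quotient.mk _ (l y) = y := surjInv_eq Ideal.Quotient.mk_surjective
  let G : Set S := insert x (l '' (maximalIdeal (S ⧸ Ideal.span {x})).generators)
  have hG : G.Finite := (hfin.image l).insert x
  have hspan : Submodule.span S G = maximalIdeal S := by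
    apply le_antisymm
    · rw [Submodule.span_le]
      rintro y (rfl | ⟨z, hz, rfl⟩)
      · exact hx
      · have hz' : z ∈ maximalIdeal (S ⧸ Ideal.span {x}) := 
          (Submodule.span_generators (maximalIdeal (S ⧸ Ideal.span {x}))).le (Submodule.subset_span hz)
        rw [← hl z] at hz'
        by_contra hc
        have hu : IsUnit (l z) := by
          by_contra hc'
          exact hc ((mem_maximalIdeal _).2 hc')
        exact (mem_maximalIdeal _).1 hz' (hu.map _)
    · intro y hy
      have h1 : Ideal.Quotient.mk (Ideal.span {x}) y ∈ 
          (Ideal.span G).map (Ideal.Quotient.mk (Ideal.span {x})) := by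
        have h2 : Ideal.Quotient.mk (Ideal.span {x}) y ∈ maximalIdeal (S ⧸ Ideal.span {x}) :=
          hmap ▸ Ideal.mem_map_of_mem _ hy
        rw [← Submodule.span_generators (maximalIdeal (S ⧸ Ideal.span {x}))] at h2
        refine (Submodule.span_le.2 ?_ : _ ≤ (_ : Ideal (S ⧸ Ideal.span {x}))) h2
        intro z hz
        have : l z ∈ Ideal.span G := Ideal.subset_span (Or.inr ⟨z, hz, rfl⟩)
        have := Ideal.mem_map_of_mem (Ideal.Quotient.mk (Ideal.span {x})) this
        rwa [hl] at this
      rw [← Ideal.mem_comap, Ideal.comap_map_of_surjective _ Ideal.Quotient.mk_surjective,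
        ← RingHom.ker_eq_comap_bot, Ideal.mk_ker, sup_eq_left.2] at h1
      · exact h1
      · rw [Ideal.span_singleton_le_iff_mem]
        exact Ideal.subset_span (Or.inl rfl)
  rw [← hspan]
  have h3 : (Submodule.span S G).spanFinrank ≤ G.ncard :=
    Submodule.spanFinrank_span_le_ncard_of_finite hG
  have h4 : G.ncard ≤ (maximalIdeal (S ⧸ Ideal.span {x})).spanFinrank + 1 := by
    refine (Set.ncard_insert_le _ _).trans ?_
    gcongr
    exact (Set.ncard_image_le hfin).trans (Submodule.FG.generators_ncard hfg).le
  exact_mod_cast h3.trans h4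

theorem serre (n d : ℕ) : ∀ (S : Type) [CommRing S] [IsLocalRing S] [IsNoetherianRing S],
    ringKrullDim S = d → 
    HasProjectiveDimensionLE (ModuleCat.of S (S ⧸ maximalIdeal S)) n → IsRegularLocalRing S := by
  induction d with
  | zero =>
    intro S _ _ _ hd h
    by_cases hA : ∃ s : S, s ≠ 0 ∧ ∀ y ∈ maximalIdeal S, y * s = 0
    · exact serreA n S hA h
    · exfalso
      obtain ⟨x, hx, hx2, hx0⟩ := exists_reg hA
      have h1 := ringKrullDim_quotient_span_singleton_succ_eq_ringKrullDim_of_mem_nonZeroDivisors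
        hx0 hx
      have : Nontrivial (S ⧸ Ideal.span {x}) := Ideal.Quotient.nontrivial_iff.2 (by
        rwa [Ne, Ideal.span_singleton_eq_top])
      have h2 : 0 ≤ ringKrullDim (S ⧸ Ideal.span {x}) := ringKrullDim_nonneg_of_nontrivial
      rw [hd] at h1
      have h3 : (1 : WithBot ℕ∞) ≤ ringKrullDim (S ⧸ Ideal.span {x}) + 1 := by
        simpa using add_le_add_left h2 1
      rw [h1] at h3
      exact absurd h3 (by norm_num)
  | succ d ih =>
    intro S _ _ _ hd h
    by_cases hA : ∃ s : S, s ≠ 0 ∧ ∀ y ∈ maximalIdeal S, y * s = 0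
    · exact serreA n S hA h
    · obtain ⟨x, hx, hx2, hx0⟩ := exists_reg hA
      have h1 := ringKrullDim_quotient_span_singleton_succ_eq_ringKrullDim_of_mem_nonZeroDivisors
        hx0 hx
      have : Nontrivial (S ⧸ Ideal.span {x}) := Ideal.Quotient.nontrivial_iff.2 (by
        rwa [Ne, Ideal.span_singleton_eq_top])
      have : IsLocalRing (S ⧸ Ideal.span {x}) := 
        IsLocalRing.of_surjective' (Ideal.Quotient.mk _) Ideal.Quotient.mk_surjective
      apply reg_lift x hx hx0
      apply ih
      · rw [hd] at h1
        push_cast at h1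
        exact wb_cancel _ d h1
      · obtain ⟨r⟩ := retr x hx hx2
        have h3 : HasProjectiveDimensionLE (ModuleCat.of S (maximalIdeal S)) n := by
          have h4 := pd_ker (Submodule.mkQ (maximalIdeal S)) (Submodule.mkQ_surjective _) n
            (hasProjectiveDimensionLT_of_ge _ (n + 1) (n + 1 + 1) (by omega))
          exact hasProjectiveDimensionLT_of_iso (LinearEquiv.toModuleIso 
            (LinearEquiv.ofEq _ _ (Submodule.ker_mkQ (maximalIdeal S)))) _
        have h4 := pd_quot x hx0 n (maximalIdeal S) (fun v hv => Subtype.ext 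
          ((mul_left_mem_nonZeroDivisors_eq_zero_iff hx0).1 (congrArg Subtype.val hv))) h3
        exact r.hasProjectiveDimensionLT _
end Part3b

section Part4a
open Function

lemma ext_bridge (R : Type) [CommRing R] (j : ℕ) (M N : ModuleCat.{0} R) :
    Subsingleton (ExtMod R j M N) ↔ Subsingleton (Abelian.Ext M N j) := by
  let P := projectiveResolution M
  let K := P.complex.linearYonedaObj R N
  have e : ExtMod R j M N ≅ K.homology j := P.isoExt j N
  have h1 : Subsingleton (ExtMod R j M N) ↔ K.ExactAt j := by
    rw [HomologicalComplex.exactAt_iff_isZero_homology, ← e.isZero_iff]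
    exact (ModuleCat.isZero_iff_subsingleton).symm
  rw [h1]
  cases j with
  | zero =>
    rw [K.exactAt_iff' 0 0 1 (by simp) (by simp), ShortComplex.moduleCat_exact_iff]
    constructor
    · intro h
      refine subsingleton_of_forall_eq 0 ?_
      intro α
      obtain ⟨f, hf, rfl⟩ := P.extMk_surjective α 1 rfl
      obtain ⟨g, hg⟩ := h f hf
      have : (0 : P.complex.X 0 ⟶ N) = f := by
        rw [← hg]
        have : (K.sc' 0 0 1).f = 0 := K.shape _ _ (by simp)
        rw [this]; rfl
      subst this
      simp
    · intro h f hf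
      have hs : Subsingleton (M ⟶ N) := Abelian.Ext.addEquiv₀.symm.subsingleton
      have h0 : (f : P.complex.X 0 ⟶ N) = 0 := by
        have h2 := P.exact₀.g_desc (A := N) f hf
        rw [← h2]
        have : P.exact₀.desc (A := N) f hf = 0 := hs.elim _ _
        rw [this]; exact Limits.comp_zero
      exact ⟨0, by rw [map_zero]; exact h0.symm⟩
  | succ j =>
    rw [K.exactAt_iff' j (j + 1) (j + 2) (by simp) (by simp), ShortComplex.moduleCat_exact_iff]
    constructor
    · intro h
      refine subsingleton_of_forall_eq 0 ?_
      intro α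
      obtain ⟨f, hf, rfl⟩ := P.extMk_surjective α (j + 2) rfl
      obtain ⟨g, hg⟩ := h f hf
      exact (P.extMk_eq_zero_iff f (j + 2) rfl hf j rfl).2 ⟨g, hg⟩
    · intro h f hf
      obtain ⟨g, hg⟩ := (P.extMk_eq_zero_iff f (j + 2) rfl hf j rfl).1 (Subsingleton.elim _ _)
      exact ⟨g, hg⟩
end Part4a

section Part4b
open Function

/-- vanishing of Ext -/
def EV (S : Type) [CommRing S] (A B : Type) [AddCommGroup A] [Module S A] [AddCommGroup B]
    [Module S B] (j : ℕ) : Prop :=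
  Subsingleton (Abelian.Ext (ModuleCat.of S A) (ModuleCat.of S B) j)

section
variable {S : Type} [CommRing S] {A A' B B' A1 A2 A3 : Type} [AddCommGroup A] [Module S A]
  [AddCommGroup B] [Module S B] [AddCommGroup A'] [Module S A'] [AddCommGroup B'] [Module S B']
  [AddCommGroup A1] [Module S A1] [AddCommGroup A2] [Module S A2] [AddCommGroup A3] [Module S A3]

lemma EV.iff_zero {j : ℕ} : EV S A B j ↔
    ∀ y : Abelian.Ext (ModuleCat.of S A) (ModuleCat.of S B) j, y = 0 :=
  ⟨fun h y => h.elim y 0, fun h => subsingleton_of_forall_eq 0 h⟩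

lemma EV.congr_left {j : ℕ} (e : A ≃ₗ[S] A') (h : EV S A B j) : EV S A' B j := by
  rw [EV.iff_zero] at h ⊢
  intro y
  have e' : ModuleCat.of S A ≅ ModuleCat.of S A' := e.toModuleIso
  have := h ((Abelian.Ext.mk₀ e'.hom).comp y (zero_add j))
  have h2 := congrArg (fun z => (Abelian.Ext.mk₀ e'.inv).comp z (zero_add j)) this
  simpa using h2

lemma EV.congr_right {j : ℕ} (e : B ≃ₗ[S] B') (h : EV S A B j) : EV S A B' j := by
  rw [EV.iff_zero] at h ⊢
  intro y
  have e' : ModuleCat.of S B ≅ ModuleCat.of S B' := e.toModuleIso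
  have := h (y.comp (Abelian.Ext.mk₀ e'.inv) (add_zero j))
  have h2 := congrArg (fun z => z.comp (Abelian.Ext.mk₀ e'.hom) (add_zero j)) this
  simpa using h2

/-- short exact sequence -/
def sesC (f : A1 →ₗ[S] A2) (g : A2 →ₗ[S] A3) (hfg : Exact f g) : ShortComplex (ModuleCat.{0} S) :=
  ShortComplex.mk (ModuleCat.ofHom f) (ModuleCat.ofHom g) (by
    rw [← ModuleCat.ofHom_comp, hfg.linearMap_comp_eq_zero]; rfl)

lemma sesC_exact (f : A1 →ₗ[S] A2) (g : A2 →ₗ[S] A3) (hf : Injective f) (hg : Surjective g)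
    (hfg : Exact f g) : (sesC f g hfg).ShortExact :=
  ModuleCat.shortComplex_shortExact _ hfg hf hg

lemma EV.contra_mid {j : ℕ} (f : A1 →ₗ[S] A2) (g : A2 →ₗ[S] A3) (hf : Injective f)
    (hg : Surjective g) (hfg : Exact f g) (h1 : EV S A1 B j) (h3 : EV S A3 B j) :
    EV S A2 B j := by
  rw [EV.iff_zero] at h1 h3 ⊢
  intro y
  obtain ⟨z, rfl⟩ := Abelian.Ext.contravariant_sequence_exact₂ (sesC_exact f g hf hg hfg) _ y 
    (h1 _)
  rw [show z = 0 from h3 z, Abelian.Ext.comp_zero]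
  rfl

lemma EV.co_mid {j : ℕ} (f : A1 →ₗ[S] A2) (g : A2 →ₗ[S] A3) (hf : Injective f)
    (hg : Surjective g) (hfg : Exact f g) (h1 : EV S B A1 j) (h3 : EV S B A3 j) :
    EV S B A2 j := by
  rw [EV.iff_zero] at h1 h3 ⊢
  intro y
  obtain ⟨z, rfl⟩ := Abelian.Ext.covariant_sequence_exact₂ _ (sesC_exact f g hf hg hfg) y 
    (h3 _)
  rw [show z = 0 from h1 z, Abelian.Ext.zero_comp]
  rfl

lemma EV.co_left {j : ℕ} (f : A1 →ₗ[S] A2) (g : A2 →ₗ[S] A3) (hf : Injective f)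
    (hg : Surjective g) (hfg : Exact f g) (h2 : EV S B A2 (j + 1)) (h3 : EV S B A3 j) :
    EV S B A1 (j + 1) := by
  rw [EV.iff_zero] at h2 h3 ⊢
  intro y
  obtain ⟨z, rfl⟩ := Abelian.Ext.covariant_sequence_exact₁ _ (sesC_exact f g hf hg hfg) y 
    (h2 _) rfl
  rw [show z = 0 from h3 z, Abelian.Ext.zero_comp]
  rfl

lemma EV.co_left_zero (f : A1 →ₗ[S] A2) (hf : Injective f) (h2 : EV S B A2 0) :
    EV S B A1 0 := by
  have h2' : Subsingleton (ModuleCat.of S B ⟶ ModuleCat.of S A2) :=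
    @Equiv.subsingleton _ _ (Abelian.Ext.addEquiv₀ (X := ModuleCat.of S B) 
      (Y := ModuleCat.of S A2)).symm.toEquiv h2
  have : Subsingleton (ModuleCat.of S B ⟶ ModuleCat.of S A1) := by
    constructor
    intro a b
    have : Mono (ModuleCat.ofHom f) := (ModuleCat.mono_iff_injective _).2 hf
    rw [← cancel_mono (ModuleCat.ofHom f)]
    exact h2'.elim _ _
  exact (Abelian.Ext.addEquiv₀ (X := ModuleCat.of S B) (Y := ModuleCat.of S A1)).subsingleton

lemma EV.nak [IsLocalRing S] [IsNoetherianRing S] [Module.Finite S A] [Module.Finite S B] {j : ℕ}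
    (x : S) (hx : x ∈ maximalIdeal S) (g : A →ₗ[S] A3) (hreg : ∀ v : A, x • v = 0 → v = 0)
    (hg : Surjective g) (hfg : Exact (LinearMap.lsmul S A x) g) 
    (h3 : EV S A3 B (j + 1)) : EV S A B j := by
  have hf : Injective (LinearMap.lsmul S A x) := 
    (injective_iff_map_eq_zero _).2 hreg
  rw [EV.iff_zero] at h3
  have hsurj : ∀ y : Abelian.Ext (ModuleCat.of S A) (ModuleCat.of S B) j, ∃ z, x • z = y := by
    intro y
    obtain ⟨z, hz⟩ := Abelian.Ext.contravariant_sequence_exact₁ (sesC_exact _ g hf hg hfg) _ y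
      (n₁ := j + 1) (by omega) (h3 _)
    let z' : Abelian.Ext (ModuleCat.of S A) (ModuleCat.of S B) j := z
    have hz' : (Abelian.Ext.mk₀ (x • 𝟙 (ModuleCat.of S A))).comp z' (zero_add j) = y := hz
    refine ⟨z', ?_⟩
    rw [← hz', Abelian.Ext.mk₀_smul, Abelian.Ext.smul_comp, Abelian.Ext.mk₀_id_comp]
  have htop : (⊤ : Submodule S (Abelian.Ext (ModuleCat.of S A) (ModuleCat.of S B) j)) = ⊥ := by
    refine Submodule.eq_bot_of_le_smul_of_le_jacobson_bot (maximalIdeal S) _ 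
      (Module.finite_def.1 inferInstance) ?_ (maximalIdeal_le_jacobson _)
    intro y _
    obtain ⟨z, rfl⟩ := hsurj y
    exact Submodule.smul_mem_smul hx trivial
  rw [EV.iff_zero]
  intro y
  have : y ∈ (⊤ : Submodule S (Abelian.Ext (ModuleCat.of S A) (ModuleCat.of S B) j)) := trivial
  rw [htop] at this
  exact this

lemma EV.of_subsingleton [Subsingleton A] (j : ℕ) : EV S A B j := by
  rw [EV.iff_zero]
  intro y
  have h : 𝟙 (ModuleCat.of S A) = 0 := by
    ext a
    exact Subsingleton.elim (α := A) _ _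
  rw [← Abelian.Ext.mk₀_id_comp y, h, Abelian.Ext.mk₀_zero, Abelian.Ext.zero_comp]

lemma EV.right_of_subsingleton [Subsingleton B] (j : ℕ) : EV S A B j := by
  rw [EV.iff_zero]
  intro y
  have h : 𝟙 (ModuleCat.of S B) = 0 := by
    ext a
    exact Subsingleton.elim (α := B) _ _
  rw [← Abelian.Ext.comp_mk₀_id y, h, Abelian.Ext.mk₀_zero, Abelian.Ext.comp_zero]

lemma EV.fin_free {j : ℕ} (h : EV S A S j) (n : ℕ) : EV S A (Fin n → S) j := by
  induction n with
  | zero => exact EV.right_of_subsingleton j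
  | succ n ih =>
    have e : (S × (Fin n → S)) ≃ₗ[S] (Fin (n + 1) → S) := Fin.consLinearEquiv S (fun _ => S)
    refine EV.congr_right e ?_
    exact EV.co_mid (LinearMap.inl S S (Fin n → S)) (LinearMap.snd S S (Fin n → S))
      LinearMap.inl_injective LinearMap.snd_surjective .inl_snd h ih

end
end Part4b

section Part4c
open Function

lemma depth_le_iff (S : Type) [CommRing S] [IsLocalRing S] (N : Type) [AddCommGroup N]
    [Module S N] (n : ℕ) : (n : ℕ∞) ≤ moduleDepth S N ↔ ∀ j, j < n → EV S (ResidueField S) N j := by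
  unfold moduleDepth EV
  constructor
  · intro h j hj
    by_contra hc
    rw [← ext_bridge, not_subsingleton_iff_nontrivial] at hc
    have := h.trans (sInf_le ⟨j, rfl, hc⟩)
    have : n ≤ j := by exact_mod_cast this
    omega
  · intro h
    refine le_sInf ?_
    rintro _ ⟨j, rfl, hj⟩
    by_contra hc
    have hc' : j < n := by
      by_contra h'
      exact hc (by exact_mod_cast (not_lt.1 h'))
    have := h j hc'
    rw [← ext_bridge, ← not_nontrivial_iff_subsingleton] at this
    exact this hj

lemma residue_equiv (S : Type) [CommRing S] [IsLocalRing S] :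
    Nonempty ((S ⧸ maximalIdeal S) ≃ₗ[S] ResidueField S) := ⟨LinearEquiv.refl S _⟩

section
variable {R : Type} [CommRing R] [IsNoetherianRing R]

lemma EV.filt (J : Ideal R) (j : ℕ) (h : ∀ Q : PrimeSpectrum R, J ≤ Q.1 → EV R (R ⧸ Q.1) R j)
    (N : Type) [AddCommGroup N] [Module R N] [Module.Finite R N] (hN : J ≤ Module.annihilator R N) :
    EV R N R j := by
  revert hN
  refine IsNoetherianRing.induction_on_isQuotientEquivQuotientPrime R (M := N) inferInstance
    (motive := fun N _ _ _ => J ≤ Module.annihilator R N → EV R N R j) ?_ ?_ ?_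
  · intro N _ _ _ _ _
    exact EV.of_subsingleton j
  · intro N _ _ _ p e hN
    refine EV.congr_left e.symm (h p ?_)
    rwa [e.annihilator_eq, Ideal.annihilator_quotient] at hN
  · intro N₁ _ _ _ N₂ _ _ _ N₃ _ _ _ f g hf hg hfg h1 h3 h2
    exact EV.contra_mid f g hf hg hfg (h1 (h2.trans (f.annihilator_le_of_injective hf)))
      (h3 (h2.trans (g.annihilator_le_of_surjective hg)))

variable [IsLocalRing R]

lemma ischebeck (d : ℕ) (hd : ∀ j, j < d → EV R (R ⧸ maximalIdeal R) R j) (e : ℕ) :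
    ∀ P : PrimeSpectrum R, Order.coheight P ≤ e → ∀ j, j + e < d → EV R (R ⧸ P.1) R j := by
  induction e with
  | zero =>
    intro P hP j hj
    have : P.1 = maximalIdeal R := by
      by_contra hne
      have hlt : P < closedPoint R := lt_of_le_of_ne (le_maximalIdeal P.2.ne_top) 
        (fun h => hne (congrArg PrimeSpectrum.asIdeal h))
      have := (Order.coheight_add_one_le hlt).trans hP
      simp at this
    rw [this]
    exact hd j (by omega)
  | succ e ih =>
    intro P hP j hj
    by_cases hne : P.1 = maximalIdeal R
    · rw [hne]
      exact hd j (by omega)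
    obtain ⟨x, hxm, hxP⟩ : ∃ x ∈ maximalIdeal R, x ∉ P.1 :=
      SetLike.exists_of_lt (lt_of_le_of_ne (le_maximalIdeal P.2.ne_top) hne)
    have h3 : EV R ((R ⧸ P.1) ⧸ LinearMap.range (LinearMap.lsmul R (R ⧸ P.1) x)) R (j + 1) := by
      refine EV.filt (P.1 ⊔ Ideal.span {x}) (j + 1) ?_ _ ?_
      · intro Q hQ
        refine ih Q ?_ (j + 1) (by omega)
        have hlt : P < Q := by
          refine lt_of_le_of_ne (le_sup_left.trans hQ : P.1 ≤ Q.1) ?_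
          rintro rfl
          exact hxP (hQ (Ideal.mem_sup_right (Ideal.mem_span_singleton_self x)))
        have := (Order.coheight_add_one_le hlt).trans hP
        push_cast at this
        exact (ENat.add_le_add_iff_right (by simp)).1 this
      · refine sup_le ?_ ?_
        · intro y hy
          rw [Module.mem_annihilator]
          intro v
          obtain ⟨v, rfl⟩ := Submodule.mkQ_surjective _ v
          rw [← map_smul]
          have : y • v = 0 := by
            have : y ∈ Module.annihilator R (R ⧸ P.1) := by rwa [Ideal.annihilator_quotient]
            exact Module.mem_annihilator.1 this v
          rw [this, map_zero]
        · rw [Ideal.span_le, Set.singleton_subset_iff, SetLike.mem_coe, Module.mem_annihilator]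
          intro v
          obtain ⟨v, rfl⟩ := Submodule.mkQ_surjective _ v
          rw [← map_smul]
          exact (Submodule.Quotient.mk_eq_zero _).2 ⟨v, rfl⟩
    refine EV.nak x hxm (Submodule.mkQ _) ?_ (Submodule.mkQ_surjective _) ?_ h3
    · intro v hv
      obtain ⟨v, rfl⟩ := Ideal.Quotient.mk_surjective v
      have : Ideal.Quotient.mk P.1 (x * v) = 0 := hv
      rw [Ideal.Quotient.eq_zero_iff_mem] at this ⊢
      exact (P.2.mem_or_mem this).resolve_left hxP
    · exact LinearMap.exact_map_mkQ_range _

lemma cm_loc (d : ℕ) (hdim : ringKrullDim R = d) 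
    (hd : ∀ j, j < d → EV R (R ⧸ maximalIdeal R) R j) (q : Ideal R) [q.IsPrime] :
    ∃ n : ℕ, n ≤ d ∧ ringKrullDim (Localization.AtPrime q) = n ∧ 
      ∀ j, j < n → EV (Localization.AtPrime q) (ResidueField (Localization.AtPrime q)) 
        (Localization.AtPrime q) j := by
  set Q : PrimeSpectrum R := ⟨q, inferInstance⟩ with hQ
  have hsum : Order.height Q + Order.coheight Q ≤ (d : ℕ∞) := by
    have h : Order.krullDim (PrimeSpectrum R) = d := hdim
    rw [Order.krullDim_eq_iSup_height_add_coheight_of_nonempty] at h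
    have h' : (⨆ a : PrimeSpectrum R, Order.height a + Order.coheight a) = (d : ℕ∞) := by
      exact_mod_cast h
    rw [← h']
    exact le_iSup (fun a : PrimeSpectrum R => Order.height a + Order.coheight a) Q
  obtain ⟨n, hn⟩ : ∃ n : ℕ, (n : ℕ∞) = Order.height Q :=
    ENat.ne_top_iff_exists.1 (fun h => by simp [h] at hsum)
  obtain ⟨e, he⟩ : ∃ n : ℕ, (n : ℕ∞) = Order.coheight Q :=
    ENat.ne_top_iff_exists.1 (fun h => by simp [h] at hsum)
  rw [← hn, ← he] at hsum
  have hne : n + e ≤ d := by exact_mod_cast hsum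
  refine ⟨n, by omega, ?_, ?_⟩
  · rw [IsLocalization.AtPrime.ringKrullDim_eq_height q, Q.height_eq_orderHeight, ← hn]
    rfl
  obtain ⟨rs, hlen, hmem, hreg⟩ := ModuleCat.exists_isRegular_of_exists_subsingleton_ext q n
    (ModuleCat.of R R) (by
      rw [smul_eq_mul, Ideal.mul_top]
      exact Ideal.IsPrime.ne_top'.lt_top) (ModuleCat.of R (R ⧸ q)) (by
      rw [Module.support_eq_zeroLocus]
      congr 1
      exact congrArg _ Ideal.annihilator_quotient) 
      (fun j hj => ischebeck d hd e Q he.ge j (by omega))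
  have hreg2 := RingTheory.Sequence.IsWeaklyRegular.isRegular_of_isLocalization_of_mem
    (Localization.AtPrime q) q hreg.toIsWeaklyRegular hmem
  have := ModuleCat.subsingleton_ext_of_exists_isRegular (maximalIdeal (Localization.AtPrime q))
    (ModuleCat.of _ (Localization.AtPrime q ⧸ (maximalIdeal (Localization.AtPrime q)))) (by
      rw [Module.support_eq_zeroLocus]
      exact (congrArg (fun I : Ideal (Localization.AtPrime q) => 
        PrimeSpectrum.zeroLocus (I : Set (Localization.AtPrime q))) Ideal.annihilator_quotient).le) 
      (ModuleCat.of _ (Localization.AtPrime q)) (by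
      rw [smul_eq_mul, Ideal.mul_top]
      exact Ideal.IsPrime.ne_top'.lt_top) _ (by
      intro r hr
      obtain ⟨s, hs, rfl⟩ := List.mem_map.1 hr
      exact (IsLocalization.AtPrime.to_map_mem_maximal_iff _ q s).2 (hmem s hs)) hreg2
  intro j hj
  obtain ⟨e⟩ := residue_equiv (Localization.AtPrime q)
  exact EV.congr_left e (this j (by simpa [hlen] using hj))

end
end Part4c

section Part5a
open Function TensorProduct

/-- bundled finite modules -/
structure FM (R : Type) [CommRing R] where
  /-- carrier -/
  M : Type
  [acg : AddCommGroup M]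
  [mod : Module R M]
  [fin : Module.Finite R M]

attribute [instance] FM.acg FM.mod FM.fin

section
variable {R : Type} [CommRing R]

/-- rank -/
def FM.n (X : FM R) : ℕ := (Module.Finite.exists_fin' R X.M).choose

/-- cover -/
def FM.cov (X : FM R) : (Fin X.n → R) →ₗ[R] X.M := (Module.Finite.exists_fin' R X.M).choose_spec.choose

lemma FM.cov_surj (X : FM R) : Surjective X.cov :=
  (Module.Finite.exists_fin' R X.M).choose_spec.choose_spec

variable [IsNoetherianRing R]

/-- syzygy -/
def FM.syz (X : FM R) : FM R := ⟨LinearMap.ker X.cov⟩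

/-- iterated syzygy -/
def FM.sy : ℕ → FM R → FM R
  | 0, X => X
  | k + 1, X => (FM.sy k X).syz

/-- `a` kills `Tor_1(X, Y)` -/
def FM.T (a : R) (X Y : FM R) : Prop := KL a X.cov Y.M

lemma FM.T_iff (a : R) (X Y : FM R) : FM.T a X Y ↔ KR a X.M Y.cov :=
  (KR_iff_KL a X.cov Y.cov X.cov_surj Y.cov_surj).symm

lemma FM.T_syz (a : R) (X Y : FM R) : FM.T a X Y.syz ↔ FM.T a X.syz Y := by
  rw [FM.T_iff a X.syz]
  exact KL_ker_iff a X.cov Y.cov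

lemma FM.T_sy (a : R) (j : ℕ) : ∀ (i : ℕ) (X Y : FM R), 
    FM.T a (FM.sy i X) (FM.sy j Y) ↔ FM.T a (FM.sy (i + j) X) Y := by
  induction j with
  | zero => intro i X Y; rfl
  | succ j ih =>
    intro i X Y
    have : i + (j + 1) = (i + 1) + j := by omega
    rw [this, ← ih]
    exact FM.T_syz a (FM.sy i X) (FM.sy j Y)

lemma FM.T_of_tor (a : R) (X Y : FM R) 
    (h : a ∈ Module.annihilator R (TorMod R 1 (ModuleCat.of R X.M) (ModuleCat.of R Y.M))) :
    FM.T a X Y := by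
  obtain ⟨F, _, _, _, f, hf, hk⟩ := tor_KR a _ _ h
  exact (KR_iff_KL a X.cov f X.cov_surj hf).1 hk

/-- truncation -/
def FM.tr [IsLocalRing R] (X : FM R) (n : ℕ) : FM R := 
  ⟨X.M ⧸ ((maximalIdeal R) ^ n • (⊤ : Submodule R X.M))⟩

lemma FM.main [IsLocalRing R] (a : R) (d : ℕ) (X : FM R) 
    (h : ∀ n n', FM.T a (FM.sy d (X.tr n)) (FM.sy d (X.tr n'))) : 
    FM.T a X (FM.sy (d + d) X) := by
  rw [FM.T_iff]
  refine KR_krull a _ fun n => ?_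
  refine (FM.T_iff a (X.tr n) (FM.sy (d + d) X)).1 ?_
  have h0 := FM.T_sy a (d + d) 0 (X.tr n) X
  refine h0.2 ?_
  refine KL_krull a _ fun n' => ?_
  have h2 := (FM.T_sy a d d (X.tr n) (X.tr n')).1 (h n n')
  rw [zero_add]
  exact h2

section loc
variable (q : Ideal R) [q.IsPrime]

/-- localization -/
abbrev FM.L (X : FM R) : Type := LocalizedModule q.primeCompl X.M

lemma FM.loc_ses (X : FM R) : 
    ∃ (F : Type) (_ : AddCommGroup F) (_ : Module (Localization.AtPrime q) F) 
      (_ : Module.Free (Localization.AtPrime q) F) (_ : Module.Finite (Localization.AtPrime q) F)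
      (f : X.syz.L q →ₗ[Localization.AtPrime q] F) (g : F →ₗ[Localization.AtPrime q] X.L q),
      Injective f ∧ Surjective g ∧ Exact f g := by
  have h1 : Module.Free (Localization.AtPrime q) (LocalizedModule q.primeCompl (Fin X.n → R)) :=
    Module.free_of_isLocalizedModule q.primeCompl (LocalizedModule.mkLinearMap q.primeCompl _)
  have h2 : Module.Finite (Localization.AtPrime q) (LocalizedModule q.primeCompl (Fin X.n → R)) :=
    Module.Finite.of_isLocalizedModule q.primeCompl (LocalizedModule.mkLinearMap q.primeCompl _)
  refine ⟨LocalizedModule q.primeCompl (Fin X.n → R), inferInstance, inferInstance, h1, h2, 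
    LocalizedModule.map q.primeCompl (LinearMap.ker X.cov).subtype, 
    LocalizedModule.map q.primeCompl X.cov, ?_, ?_, ?_⟩
  · exact LocalizedModule.map_injective _ _ (Submodule.subtype_injective _)
  · exact LocalizedModule.map_surjective _ _ X.cov_surj
  · exact LocalizedModule.map_exact _ _ _ (LinearMap.exact_subtype_ker_map _)

lemma FM.pd_up (X : FM R) (n : ℕ) 
    (h : HasProjectiveDimensionLE (ModuleCat.of (Localization.AtPrime q) (X.syz.L q)) n) :
    HasProjectiveDimensionLE (ModuleCat.of (Localization.AtPrime q) (X.L q)) (n + 1) := by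
  obtain ⟨F, _, _, _, _, f, g, hf, hg, hfg⟩ := X.loc_ses q
  have e : X.syz.L q ≃ₗ[Localization.AtPrime q] LinearMap.ker g :=
    (LinearEquiv.ofInjective f hf).trans (LinearEquiv.ofEq _ _ hfg.linearMap_ker_eq.symm)
  refine pd_of_ker g hg n ?_
  exact hasProjectiveDimensionLT_of_iso e.toModuleIso _

lemma FM.pd_down (X : FM R) (n : ℕ) 
    (h : HasProjectiveDimensionLE (ModuleCat.of (Localization.AtPrime q) (X.L q)) (n + 1)) :
    HasProjectiveDimensionLE (ModuleCat.of (Localization.AtPrime q) (X.syz.L q)) n := by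
  obtain ⟨F, _, _, _, _, f, g, hf, hg, hfg⟩ := X.loc_ses q
  have e : X.syz.L q ≃ₗ[Localization.AtPrime q] LinearMap.ker g :=
    (LinearEquiv.ofInjective f hf).trans (LinearEquiv.ofEq _ _ hfg.linearMap_ker_eq.symm)
  have := pd_ker g hg n h
  exact hasProjectiveDimensionLT_of_iso e.symm.toModuleIso _

lemma FM.pd_sy (X : FM R) (k : ℕ) : ∀ n,
    HasProjectiveDimensionLE (ModuleCat.of (Localization.AtPrime q) ((FM.sy k X).L q)) n →
    HasProjectiveDimensionLE (ModuleCat.of (Localization.AtPrime q) (X.L q)) (n + k) := by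
  induction k with
  | zero => intro n h; exact h
  | succ k ih =>
    intro n h
    have := ih (n + 1) (FM.pd_up q _ n h)
    rwa [show n + (k + 1) = n + 1 + k by omega]

lemma FM.pd_zero (X : FM R) (h : Subsingleton (X.L q)) (k : ℕ) :
    HasProjectiveDimensionLE (ModuleCat.of (Localization.AtPrime q) ((FM.sy k X).L q)) 0 := by
  induction k with
  | zero =>
    have : Module.Projective (Localization.AtPrime q) (X.L q) := inferInstance
    rw [← projective_iff_hasProjectiveDimensionLE_zero]
    exact (IsProjective.iff_projective _).1 this
  | succ k ih =>
    exact FM.pd_down q _ 0 (hasProjectiveDimensionLT_of_ge _ 1 2 (by omega))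

lemma FM.free_of_pd_zero (X : FM R) 
    (h : HasProjectiveDimensionLE (ModuleCat.of (Localization.AtPrime q) (X.L q)) 0) :
    Module.Free (Localization.AtPrime q) (X.L q) := by
  rw [← projective_iff_hasProjectiveDimensionLE_zero] at h
  have : Module.Projective (Localization.AtPrime q) (X.L q) := (IsProjective.iff_projective _).2 h
  have h2 : Module.Finite (Localization.AtPrime q) (X.L q) :=
    Module.Finite.of_isLocalizedModule q.primeCompl (LocalizedModule.mkLinearMap q.primeCompl _)
  exact Module.free_of_flat_of_isLocalRing

lemma FM.ev_sy (X : FM R) (n : ℕ) (hn : ∀ j, j < n → EV (Localization.AtPrime q) 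
    (ResidueField (Localization.AtPrime q)) (Localization.AtPrime q) j) (k : ℕ) :
    ∀ j, j < k → j < n → EV (Localization.AtPrime q) 
      (ResidueField (Localization.AtPrime q)) ((FM.sy k X).L q) j := by
  induction k with
  | zero => intro j hj; omega
  | succ k ih =>
    intro j hj hjn
    obtain ⟨F, _, _, _, _, f, g, hf, hg, hfg⟩ := (FM.sy k X).loc_ses q
    have hF : ∀ j, j < n → EV (Localization.AtPrime q) 
        (ResidueField (Localization.AtPrime q)) F j := fun j hj =>
      EV.congr_right (Module.finBasis (Localization.AtPrime q) F).equivFun.symm 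
        (EV.fin_free (hn j hj) _)
    cases j with
    | zero => exact EV.co_left_zero f hf (hF 0 hjn)
    | succ j => exact EV.co_left f g hf hg hfg (hF _ hjn) (ih j (by omega) (by omega))

end loc

lemma FM.tr_loc [IsLocalRing R] (X : FM R) (n : ℕ) (q : Ideal R) [q.IsPrime] 
    (hq : q ≠ maximalIdeal R) : Subsingleton ((X.tr n).L q) := by
  obtain ⟨x, hxm, hxq⟩ : ∃ x ∈ maximalIdeal R, x ∉ q :=
    SetLike.exists_of_lt (lt_of_le_of_ne (le_maximalIdeal (Ideal.IsPrime.ne_top inferInstance)) hq)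
  rw [LocalizedModule.subsingleton_iff]
  intro v
  refine ⟨x ^ n, (q.primeCompl).pow_mem hxq n, ?_⟩
  obtain ⟨w, rfl⟩ := Submodule.mkQ_surjective _ v
  exact (Submodule.Quotient.mk_eq_zero ((maximalIdeal R) ^ n • (⊤ : Submodule R X.M))).2 
    (Submodule.smul_mem_smul (Ideal.pow_mem_pow hxm n) trivial)

lemma FM.memCM0 [IsLocalRing R] (d : ℕ) (hdim : ringKrullDim R = d) 
    (hd : ∀ j, j < d → EV R (R ⧸ maximalIdeal R) R j) (X : FM R) (n : ℕ) :
    MemCM0 R (ModuleCat.of R (FM.sy d (X.tr n)).M) := by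
  refine ⟨(FM.sy d (X.tr n)).fin, ?_, ?_⟩
  · intro q _
    obtain ⟨h, hle, hdimq, hev⟩ := cm_loc d hdim hd q
    rw [hdimq]
    have : (h : ℕ∞) ≤ moduleDepth (Localization.AtPrime q) ((FM.sy d (X.tr n)).L q) := by
      rw [depth_le_iff]
      intro j hj
      exact FM.ev_sy q _ h hev d j (by omega) hj
    exact_mod_cast this
  · intro q _ hq
    exact FM.free_of_pd_zero q _ (FM.pd_zero q _ (X.tr_loc n q hq) d)

end
end Part5a

section Part5b
open Function TensorProduct

section
variable {R : Type} [CommRing R] (p : Ideal R) [p.IsPrime] {K : Type} [AddCommGroup K] [Module R K]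

/-- comparison map -/
def thetaMap : p ⊗[R] K →ₗ[R] (maximalIdeal (Localization.AtPrime p)) ⊗[Localization.AtPrime p] 
    (LocalizedModule p.primeCompl K) :=
  TensorProduct.lift (LinearMap.mk₂ R (fun x k => 
    (⟨algebraMap R (Localization.AtPrime p) x.1, 
      (IsLocalization.AtPrime.to_map_mem_maximal_iff _ p x.1).2 x.2⟩ : 
      maximalIdeal (Localization.AtPrime p)) ⊗ₜ[Localization.AtPrime p] 
      LocalizedModule.mkLinearMap p.primeCompl K k) 
    (by
      intro x y k
      rw [← TensorProduct.add_tmul]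
      congr 1
      ext
      simp)
    (by
      intro c x k
      rw [TensorProduct.smul_tmul']
      congr 1
      ext
      simp [Algebra.smul_def])
    (by
      intro x k k'
      rw [← TensorProduct.tmul_add, map_add])
    (by
      intro c x k
      rw [map_smul, ← TensorProduct.tmul_smul]))

lemma thetaMap_tmul (x : p) (k : K) : thetaMap p (x ⊗ₜ[R] k) = 
    (⟨algebraMap R (Localization.AtPrime p) x.1, 
      (IsLocalization.AtPrime.to_map_mem_maximal_iff _ p x.1).2 x.2⟩ : 
      maximalIdeal (Localization.AtPrime p)) ⊗ₜ[Localization.AtPrime p] 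
      LocalizedModule.mkLinearMap p.primeCompl K k := rfl

lemma theta_surj (z : (maximalIdeal (Localization.AtPrime p)) ⊗[Localization.AtPrime p] 
    (LocalizedModule p.primeCompl K)) : ∃ (s : R) (w : p ⊗[R] K), s ∉ p ∧ s • z = thetaMap p w := by
  induction z with
  | zero => exact ⟨1, 0, p.primeCompl.one_mem, by simp⟩
  | add z z' h h' =>
    obtain ⟨s, w, hs, hw⟩ := h
    obtain ⟨s', w', hs', hw'⟩ := h'
    refine ⟨s * s', s' • w + s • w', p.primeCompl.mul_mem hs hs', ?_⟩
    rw [map_add, map_smul, map_smul, ← hw, ← hw', smul_add, mul_smul, smul_comm s s' z, mul_smul]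
  | tmul x v =>
    obtain ⟨x, hx⟩ := x
    obtain ⟨⟨r, s⟩, hr⟩ := IsLocalization.surj p.primeCompl x
    obtain ⟨⟨k, t⟩, hk⟩ := IsLocalizedModule.surj p.primeCompl 
      (LocalizedModule.mkLinearMap p.primeCompl K) v
    have hrp : r ∈ p := by
      rw [← IsLocalization.AtPrime.to_map_mem_maximal_iff (Localization.AtPrime p) p r, ← hr]
      exact Ideal.mul_mem_right _ _ hx
    refine ⟨t.1 * s.1, (⟨r, hrp⟩ : p) ⊗ₜ[R] k, p.primeCompl.mul_mem t.2 s.2, ?_⟩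
    rw [thetaMap_tmul, ← hk, mul_smul, TensorProduct.smul_tmul' s.1, ← TensorProduct.tmul_smul]
    congr 1
    ext
    change s.1 • x = algebraMap R (Localization.AtPrime p) r
    rw [← hr, Algebra.smul_def, mul_comm]

lemma theta_inj (a : R) (ha : a ∉ p) (h : ∀ t : p ⊗[R] K, p.subtype.rTensor K t = 0 → a • t = 0) :
    Injective ((maximalIdeal (Localization.AtPrime p)).subtype.rTensor 
      (LocalizedModule p.primeCompl K)) := by
  rw [injective_iff_map_eq_zero]
  intro z hz
  obtain ⟨s, w, hs, hw⟩ := theta_surj p z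
  let φ : p ⊗[R] K →ₗ[R] K := (TensorProduct.lid R K).toLinearMap ∘ₗ p.subtype.rTensor K
  let ψ : (maximalIdeal (Localization.AtPrime p)) ⊗[Localization.AtPrime p] 
    (LocalizedModule p.primeCompl K) →ₗ[Localization.AtPrime p] LocalizedModule p.primeCompl K :=
    (TensorProduct.lid _ _).toLinearMap ∘ₗ 
      (maximalIdeal (Localization.AtPrime p)).subtype.rTensor (LocalizedModule p.primeCompl K)
  have hcomm : ∀ w, ψ (thetaMap p w) = LocalizedModule.mkLinearMap p.primeCompl K (φ w) := by
    intro w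
    induction w with
    | zero => simp
    | add x y hx hy => rw [map_add, map_add, map_add, map_add, hx, hy]
    | tmul x k => simp [φ, ψ, thetaMap_tmul]
  have h0 : LocalizedModule.mkLinearMap p.primeCompl K (φ w) = 0 := by
    rw [← hcomm, ← hw, ← algebraMap_smul (Localization.AtPrime p) s z, map_smul]
    simp [ψ, hz]
  obtain ⟨t, ht⟩ := (IsLocalizedModule.eq_zero_iff p.primeCompl 
      (LocalizedModule.mkLinearMap p.primeCompl K)).1 h0
  have h1 : p.subtype.rTensor K (t.1 • w) = 0 := by
    apply (TensorProduct.lid R K).injective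
    rw [map_zero]
    have : φ (t.1 • w) = 0 := by rw [map_smul]; exact ht
    exact this
  have h2 := h _ h1
  have h3 : (a * t.1 * s) • z = 0 := by
    rw [mul_smul, hw, ← map_smul, mul_smul, h2, map_zero]
  have hu : IsUnit (algebraMap R (Localization.AtPrime p) (a * t.1 * s)) :=
    IsLocalization.map_units (Localization.AtPrime p) 
      (⟨a * t.1 * s, p.primeCompl.mul_mem (p.primeCompl.mul_mem ha t.2) hs⟩ : p.primeCompl)
  rw [← algebraMap_smul (Localization.AtPrime p)] at h3
  exact (hu.smul_eq_zero).1 h3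

lemma loc_residue : Nonempty (LocalizedModule p.primeCompl (R ⧸ p) ≃ₗ[Localization.AtPrime p] 
    (Localization.AtPrime p ⧸ maximalIdeal (Localization.AtPrime p))) := by
  let A := Localization.AtPrime p
  let f := Submodule.toLocalizedQuotient' A p.primeCompl (Algebra.linearMap R A) p
  have e1 := IsLocalizedModule.iso p.primeCompl f
  have e2 := LinearEquiv.extendScalarsOfIsLocalization p.primeCompl A e1
  have h : Submodule.localized' A p.primeCompl (Algebra.linearMap R A) p = maximalIdeal A := by
    rw [← Localization.AtPrime.map_eq_maximalIdeal]
    exact Ideal.localized'_eq_map _ _ _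
  exact ⟨e2.trans (Submodule.quotEquivOfEq _ _ h)⟩

end

lemma regular_conv (S : Type) [CommRing S] [IsLocalRing S] [IsNoetherianRing S] 
    (h : IsRegularLocalRing S) : IsRegularLocal S := by
  refine ⟨inferInstance, ?_⟩
  have hfg : (maximalIdeal S).FG := IsNoetherian.noetherian _
  have hfin := Submodule.FG.finite_generators hfg
  refine ⟨hfin.toFinset, ?_, ?_⟩
  · rw [Set.Finite.coe_toFinset]
    exact Submodule.span_generators _
  · rw [← Set.ncard_eq_toFinset_card _ hfin, Submodule.FG.generators_ncard hfg]
    exact IsRegularLocalRing.spanFinrank_maximalIdeal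

end Part5b

/-- Let `R` be a Cohen-Macaulay noetherian local ring with maximal ideal
`m`. If `⋂_{i>0, M,N ∈ CM₀(R)} Ann Tor_i(M,N)` is `m`-primary, then `R` is an isolated
singularity. -/
theorem stmt17 (R : Type) [CommRing R] [IsNoetherianRing R] [IsLocalRing R]
    (hCM : IsCMLocalRing R)
    (hprim : (⨅ (i : ℕ) (_ : 0 < i) (M : ModuleCat.{0} R) (_ : MemCM0 R M)
        (N : ModuleCat.{0} R) (_ : MemCM0 R N),
        Module.annihilator R (TorMod R i M N)).radical = maximalIdeal R) :
    ∀ (p : Ideal R) [p.IsPrime], p ≠ maximalIdeal R →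
      IsRegularLocal (Localization.AtPrime p) := by
  intro p hp hpm
  obtain ⟨a, haI, hap⟩ : ∃ a ∈ (⨅ (i : ℕ) (_ : 0 < i) (M : ModuleCat.{0} R) (_ : MemCM0 R M)
        (N : ModuleCat.{0} R) (_ : MemCM0 R N),
        Module.annihilator R (TorMod R i M N)), a ∉ p := by
    by_contra hc
    push Not at hc
    have h1 := (hp.radical_le_iff (I := _)).2 hc
    rw [hprim] at h1
    exact hpm (le_antisymm (le_maximalIdeal hp.ne_top) h1)
  have hkill : ∀ M N : ModuleCat.{0} R, MemCM0 R M → MemCM0 R N → 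
      a ∈ Module.annihilator R (TorMod R 1 M N) := by
    intro M N hM hN
    simp only [Submodule.mem_iInf] at haI
    exact haI 1 one_pos M hM N hN
  obtain ⟨d, hd⟩ : ∃ d : ℕ, ringKrullDim R = d := by
    have h1 : ringKrullDim R ≠ ⊤ := ringKrullDim_ne_top
    have h2 : ringKrullDim R ≠ ⊥ := ringKrullDim_ne_bot
    obtain ⟨e, he⟩ := WithBot.ne_bot_iff_exists.1 h2
    rw [← he] at h1 ⊢
    obtain ⟨n, rfl⟩ := (ENat.ne_top_iff_exists (n := e)).1 (fun h => h1 (by rw [h]; rfl))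
    exact ⟨n, rfl⟩
  have hev : ∀ j, j < d → EV R (R ⧸ maximalIdeal R) R j := by
    have h0 : (d : ℕ∞) ≤ moduleDepth R R := by
      have : (moduleDepth R R : WithBot ℕ∞) = d := hCM.trans hd
      exact_mod_cast this.ge
    intro j hj
    obtain ⟨e⟩ := residue_equiv R
    exact EV.congr_left e.symm ((depth_le_iff R R d).1 h0 j hj)
  let X : FM R := ⟨R ⧸ p⟩
  have hT : FM.T a X (FM.sy (d + d) X) := FM.main a d X fun n n' =>
    FM.T_of_tor a _ _ (hkill _ _ (FM.memCM0 d hd hev X n) (FM.memCM0 d hd hev X n'))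
  rw [FM.T_iff] at hT
  have hK := (KR_iff_KL a p.mkQ (FM.cov _) p.mkQ_surjective (FM.cov_surj _)).1 hT
  have hinj : Function.Injective ((maximalIdeal (Localization.AtPrime p)).subtype.rTensor 
      ((FM.sy (d + d) X).L p)) := by
    refine theta_inj p a hap ?_
    have hker : LinearMap.ker p.mkQ = p := p.ker_mkQ
    unfold KL at hK
    rw [hker] at hK
    exact hK
  have hfin : Module.Finite (Localization.AtPrime p) ((FM.sy (d + d) X).L p) :=
    Module.Finite.of_isLocalizedModule p.primeCompl (LocalizedModule.mkLinearMap p.primeCompl _)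
  have hfp : Module.FinitePresentation (Localization.AtPrime p) ((FM.sy (d + d) X).L p) :=
    Module.finitePresentation_of_finite _ _
  have hfree : Module.Free (Localization.AtPrime p) ((FM.sy (d + d) X).L p) :=
    Module.free_of_maximalIdeal_rTensor_injective hinj
  have hpd : HasProjectiveDimensionLE (ModuleCat.of (Localization.AtPrime p) 
      ((FM.sy (d + d) X).L p)) 0 := by
    rw [← projective_iff_hasProjectiveDimensionLE_zero]
    exact (IsProjective.iff_projective _).1 inferInstance
  have hpd2 := FM.pd_sy p X (d + d) 0 hpd
  obtain ⟨e⟩ := loc_residue p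
  have hpd3 : HasProjectiveDimensionLE (ModuleCat.of (Localization.AtPrime p) 
      (Localization.AtPrime p ⧸ maximalIdeal (Localization.AtPrime p))) (0 + (d + d)) :=
    hasProjectiveDimensionLT_of_iso (X := ModuleCat.of _ (X.L p)) e.toModuleIso _
  obtain ⟨n, _, hn, _⟩ := cm_loc d hd hev p
  exact regular_conv _ (serre _ n _ hn hpd3)

end
end
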